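/- arXiv:2509.25118 — 2 statements merged into one kernel-verified Lean document; each statement's English description precedes it below -/
import Mathlib

section
/- Let G be a group (possibly infinite) that is the symmetric group Sym(Ω) of all permutations of some set Ω. Then G satisfies the Herzog–Schönheim conjecture: if k ≥ 2, H_1,…,H_k are proper subgroups of G and x_1,…,x_k are elements of G such that G = ⋃_{i=1}^k H_i x_i and H_i x_i ∩ H_j x_j = ∅ for all i ≠ j, then [G:H_i] = [G:H_j] for some i ≠ j. -/
/-!
For infinite `Ω`, the group `Sym(Ω)` has no proper subgroup of finite index, so all the indices are
`0` in the convention of `Subgroup.index`. It suffices that every homomorphism `φ` from `Sym(Ω)` to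
a finite group of order `m` is trivial. If `g` fixes a set of full cardinality pointwise, then there
is room for countably many copies of its support, and `g`, acting on copy `0`, satisfies
`g * τ ^ m * F = F * τ ^ m`, where `τ` shifts the copies and `F` is `g` on the copies
`0, m, 2 * m, …`; hence `φ g = 1` (`fixes_large_mem_ker`). A general `g` is a product of two such
permutations (`hom_to_finite_trivial`).

For finite `Ω` with `n ≥ 3` elements, suppose that the indices are distinct. If one of the subgroups
is the alternating group, the other cosets partition the odd or the even permutations, which yields
a partition of `A_n`. So there is a partition of `Γ = S_n` or `Γ = A_n` by cosets of subgroups not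
containing `A_n`. The indices `d` divide `n!`, are pairwise not coprime (cosets of subgroups of
coprime index meet) and satisfy `∑ d⁻¹ = 1`, and `d ≥ n` if `n ≥ 5` as `A_n` is simple.

The decisive restriction comes from a prime `p` with `n / 2 < p ≤ n - 3`, which exists for `n ≥ 8`
by a refinement of the proof of Bertrand's postulate. If `p` does not divide the index of `K`, then
`K` contains a `p`-cycle. Either `K` is transitive, hence primitive, hence contains `A_n` by a
theorem of Jordan (`jordan_prime_cycle`), or it stabilizes a set of `j` points with
`1 ≤ j ≤ n - p`, and then `n.choose j` divides its index. Consequently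
`1 = ∑ d⁻¹ ≤ (S - 1) / p + S * ∑ (n.choose j)⁻¹`, where `S` is the sum of the reciprocals of the
divisors of `n! / p`. Since `S ≤ ∏ (1 - q⁻¹)⁻¹` over the primes `q ≤ n`, and this product is at most
`n / 4` for `n ≥ 25`, the right-hand side is less than `1` for those `n`; the cases `8 ≤ n ≤ 24` are
numerical. For `3 ≤ n ≤ 7`, listing the divisors of `n!` and using that the indices are pairwise not
coprime already gives a contradiction.
-/

section

open MulAction

/-! ### Infinite symmetric groups have no proper subgroups of finite index -/

/-- A permutation of `α × ℤ` supported on the copy `α × {0}` dies in every finite quotient. -/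
lemma block_mem_ker {α Q : Type*} [Group Q] [Finite Q] (φ : Equiv.Perm (α × ℤ) →* Q)
    (g : Equiv.Perm α) :
    φ (Equiv.prodCongrLeft fun i : ℤ => if i = 0 then g else 1) = 1 := by
  set m := Nat.card Q with hm
  have hm0 : 0 < m := Nat.card_pos
  set τ : Equiv.Perm (α × ℤ) := Equiv.prodCongr (Equiv.refl α) (Equiv.addRight 1) with hτ
  have hτm : ∀ (k : ℕ) (a : α) (i : ℤ), (τ ^ k) (a, i) = (a, i + k) := by
    intro k
    induction k with
    | zero => simp
    | succ k ih => intro a i; rw [pow_succ', Equiv.Perm.mul_apply, ih]; simp [hτ]; ring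
  set f : ℤ → Equiv.Perm α := fun i => if 0 ≤ i ∧ (m : ℤ) ∣ i then g else 1 with hf
  -- `f` acts as `g` on the copies `0, m, 2 * m, …`; its conjugate by `τ ^ m` acts as `g` on the
  -- copies `m, 2 * m, …` only, so it differs from `f` by the action of `g` on copy `0`
  have key : (Equiv.prodCongrLeft fun i : ℤ => if i = 0 then g else 1) *
      (τ ^ m * (Equiv.prodCongrLeft f : Equiv.Perm (α × ℤ))) =
      (Equiv.prodCongrLeft f : Equiv.Perm (α × ℤ)) * τ ^ m := by
    ext1 ⟨a, i⟩
    simp only [Equiv.Perm.mul_apply, hτm, Equiv.prodCongrLeft_apply]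
    congr 1
    by_cases h0 : i + m = 0
    · have h1 : ¬ (0 ≤ i) := by omega
      simp [hf, h0, h1]
    · have h1 : (m : ℤ) ∣ i + m ↔ (m : ℤ) ∣ i := by simp
      have h2 : (m : ℤ) ∣ i → (0 ≤ i + m ↔ 0 ≤ i) := by
        rintro ⟨c, rfl⟩
        constructor
        · intro h
          have : 0 < (m : ℤ) * (c + 1) := by
            rcases lt_or_eq_of_le h with h | h
            · linarith
            · exact absurd h.symm h0
          have hc : 0 < c + 1 := by
            by_contra hc
            push Not at hc
            nlinarith
          have : 0 ≤ c := by omega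
          positivity
        · intro h; positivity
      simp only [hf, h0, if_false, h1, Equiv.Perm.one_apply]
      by_cases h3 : (m : ℤ) ∣ i
      · simp [h3, h2 h3]
      · simp [h3]
  have := congrArg φ key
  rw [map_mul, map_mul, map_mul, map_pow, hm, pow_card_eq_one', one_mul, mul_one] at this
  exact mul_eq_right.mp this

open Cardinal in
/-- A permutation fixing `#Ω` points dies in every finite quotient: the complement of the fixed set `D`
and countably many disjoint copies of it fit into `Ω`, with the further copies inside `D`. -/
lemma fixes_large_mem_ker {Ω Q : Type*} [Infinite Ω] [Group Q] [Finite Q]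
    (φ : Equiv.Perm Ω →* Q) (D : Set Ω) (hD : #D = #Ω) (g : Equiv.Perm Ω)
    (hg : ∀ x ∈ D, g x = x) : φ g = 1 := by
  classical
  have hle : #((Dᶜ : Set Ω) × ℤ) ≤ #D := by
    rw [hD]
    simp only [mk_prod, mk_int, lift_aleph0, lift_uzero]
    calc #(Dᶜ : Set Ω) * ℵ₀ ≤ #Ω * #Ω := mul_le_mul' (mk_set_le _) (aleph0_le_mk Ω)
      _ = #Ω := mul_eq_self (aleph0_le_mk Ω)
  obtain ⟨j⟩ := hle
  obtain ⟨ι, hι⟩ : ∃ ι : (Dᶜ : Set Ω) × ℤ ↪ Ω, ∀ y, ι y = if y.2 = 0 then (y.1 : Ω) else j y :=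
    ⟨⟨fun y => if y.2 = 0 then y.1 else j y, by
      rintro ⟨x, i⟩ ⟨y, k⟩ h
      simp only at h
      split_ifs at h with h1 h2 h2
      · subst h1 h2; rw [Subtype.ext h]
      · exact absurd (h ▸ (j (y, k)).2) x.2
      · exact absurd (h ▸ (j (x, i)).2) y.2
      · exact j.injective (Subtype.ext h)⟩, fun _ => rfl⟩
  have hι0 : ∀ x, ι (x, 0) = x := fun x => by simp [hι]
  have hιj : ∀ x i, i ≠ 0 → ι (x, i) = j (x, i) := fun x i hi => by simp [hι, hi]
  have hinv : ∀ x, x ∈ (Dᶜ : Set Ω) ↔ g x ∈ (Dᶜ : Set Ω) := by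
    intro x
    simp only [Set.mem_compl_iff, not_iff_not]
    constructor
    · intro h; rwa [hg x h]
    · intro h
      have := g.injective (hg _ h)
      rwa [this] at h
  let g' : Equiv.Perm (Dᶜ : Set Ω) := g.subtypePerm fun x => (hinv x).symm
  have hgg : g = Equiv.Perm.viaEmbeddingHom ι
      (Equiv.prodCongrLeft fun i : ℤ => if i = 0 then g' else 1) := by
    ext y
    rw [Equiv.Perm.viaEmbeddingHom_apply]
    by_cases hy : y ∈ Set.range ι
    · obtain ⟨⟨x, i⟩, rfl⟩ := hy
      rw [Equiv.Perm.viaEmbedding_apply, Equiv.prodCongrLeft_apply]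
      by_cases h0 : i = 0
      · subst h0; simp [hι0, g']
      · simp only [hιj _ _ h0, h0, if_false, Equiv.Perm.one_apply]
        exact hg _ (j (x, i)).2
    · rw [Equiv.Perm.viaEmbedding_apply_of_notMem _ _ _ hy]
      apply hg
      by_contra h
      exact hy ⟨(⟨y, h⟩, 0), hι0 _⟩
  rw [hgg]
  exact block_mem_ker (φ.comp (Equiv.Perm.viaEmbeddingHom ι)) g'

open Cardinal in
lemma large_of_injective {Ω : Type*} (S : Set Ω) (f : Ω → Ω) (hf : Function.Injective f)
    (hS : ∀ x, f x ∈ S) : #S = #Ω :=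
  le_antisymm (mk_set_le _) (mk_le_of_injective (f := fun x => (⟨f x, hS x⟩ : S))
    fun _ _ h => hf (congrArg Subtype.val h))

open Cardinal in
/-- Every homomorphism from an infinite symmetric group to a finite group is trivial. A permutation `g`
is written as `h * (h⁻¹ * g)`, where `h` fixes `E` pointwise and agrees with `g` on `D₁`, for sets `D₁`
and `E` of full cardinality. -/
lemma hom_to_finite_trivial.{u, v} {Ω : Type u} {Q : Type v} [Infinite Ω] [Group Q] [Finite Q]
    (φ : Equiv.Perm Ω →* Q) (g : Equiv.Perm Ω) : φ g = 1 := by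
  classical
  have hΩ := aleph0_le_mk Ω
  obtain ⟨e⟩ : Nonempty (Ω ≃ Ω × Fin 3) := by
    rw [← Cardinal.eq]
    simp only [mk_prod, mk_fin, lift_natCast, lift_uzero]
    exact (mul_eq_left hΩ ((natCast_lt_aleph0).le.trans hΩ) (by norm_num)).symm
  obtain ⟨s⟩ : Nonempty (Ω ≃ Ω ⊕ Ω) := by
    rw [← Cardinal.eq]; simp [add_eq_self hΩ]
  -- `e` cuts `Ω` into three parts of full cardinality, numbered by `Fin 3`; some part `k` contains
  -- the image under `g` of `#Ω` elements of part `0`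
  obtain ⟨k, hk⟩ := infinite_pigeonhole_card
    (fun x : Ω => ULift.up (e (g (e.symm (x, 0)))).2) (#Ω) le_rfl hΩ
    ((lt_aleph0_of_finite _).trans_le (Ordinal.aleph0_le_cof_iff.2
      (Ordinal.one_lt_cof_iff.2 (isSuccLimit_ord hΩ))))
  obtain ⟨k⟩ := k
  have hk₂ : #((fun x : Ω => ULift.up.{u} (e (g (e.symm (x, 0)))).2) ⁻¹' {⟨k⟩}) = #Ω :=
    le_antisymm (mk_set_le _) hk
  obtain ⟨u⟩ := Cardinal.eq.mp hk₂
  -- `d` parametrises `#Ω` elements of part `0` that `g` maps into part `k`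
  set d : Ω → Ω := fun x => e.symm ((u.symm x : Ω), 0) with hd
  have hdinj : Function.Injective d := by
    intro x y h
    have := e.symm.injective h
    exact u.symm.injective (Subtype.ext (congrArg Prod.fst this))
  have hd0 : ∀ x, (e (d x)).2 = 0 := fun x => by simp [hd]
  have hdk : ∀ x, (e (g (d x))).2 = k := fun x => congrArg ULift.down (u.symm x).2
  -- `E` is a part different from parts `0` and `k`, while `D₁` is half of the image of `d`, so that
  -- the other half lies outside `D₁ ∪ E`
  obtain ⟨l, hl0, hlk⟩ : ∃ l : Fin 3, l ≠ 0 ∧ l ≠ k := by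
    clear * -
    revert k; decide
  set E : Set Ω := {x | (e x).2 = l} with hE
  set D₁ : Set Ω := Set.range fun x => d (s.symm (Sum.inl x)) with hD₁
  have hE' : #E = #Ω := large_of_injective E (fun x => e.symm (x, l))
    (fun x y h => congrArg Prod.fst (e.symm.injective h)) (fun x => by simp [hE])
  have hD₁' : #D₁ = #Ω := large_of_injective D₁ (fun x => d (s.symm (Sum.inl x)))
    (fun x y h => Sum.inl_injective (s.symm.injective (hdinj h))) (fun x => ⟨x, rfl⟩)
  -- `f` agrees with `g` on `D₁` and fixes `E` pointwise; as it is co-large, it extends to a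
  -- permutation `h`
  obtain ⟨f, hf⟩ : ∃ f : (D₁ ∪ E : Set Ω) ↪ Ω,
      ∀ x, f x = if (x : Ω) ∈ E then (x : Ω) else g x := ⟨⟨fun x => if (x : Ω) ∈ E then x else g x, by
    rintro ⟨x, hx⟩ ⟨y, hy⟩ h
    have aux : ∀ x ∈ D₁, g x ∉ E := by
      rintro _ ⟨x, rfl⟩ h
      exact hlk (h.symm.trans (hdk _))
    simp only at h
    split_ifs at h with h1 h2 h2
    · exact Subtype.ext h
    · exact absurd (h ▸ h1) (aux _ (hy.resolve_right h2))
    · exact absurd (h ▸ h2) (aux _ (hx.resolve_right h1))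
    · exact Subtype.ext (g.injective h)⟩, fun _ => rfl⟩
  have hd2 : ∀ x, d (s.symm (Sum.inr x)) ∈ (D₁ ∪ E)ᶜ := by
    rintro x (⟨y, hy⟩ | h)
    · simpa using hdinj hy
    · exact hl0 (h.symm.trans (hd0 _))
  have hc1 : #((D₁ ∪ E)ᶜ : Set Ω) = #Ω :=
    large_of_injective _ (fun x => d (s.symm (Sum.inr x)))
      (fun x y h => Sum.inr_injective (s.symm.injective (hdinj h))) hd2
  have hc2 : #((Set.range f)ᶜ : Set Ω) = #Ω := by
    refine large_of_injective _ (fun x => g (d (s.symm (Sum.inr x))))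
      (fun x y h => Sum.inr_injective (s.symm.injective (hdinj (g.injective h)))) ?_
    rintro x ⟨⟨y, hy⟩, h⟩
    rw [hf] at h
    split_ifs at h with h1
    · rw [h] at h1
      exact hlk (h1.symm.trans (hdk _))
    · have := g.injective h
      exact hd2 x (this ▸ hy)
  obtain ⟨h, hh⟩ := extend_function f (Cardinal.eq.mp (hc1.trans hc2.symm))
  have h1 : φ h = 1 := by
    refine fixes_large_mem_ker φ E hE' h fun x hx => ?_
    rw [hh ⟨x, Or.inr hx⟩]
    simp [hf, hx]
  have h2 : φ (h⁻¹ * g) = 1 := by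
    refine fixes_large_mem_ker φ D₁ hD₁' _ fun x hx => ?_
    have hxE : x ∉ E := by
      obtain ⟨y, rfl⟩ := hx
      intro h
      exact hl0 (h.symm.trans (hd0 _))
    rw [Equiv.Perm.mul_apply, Equiv.Perm.inv_eq_iff_eq, hh ⟨x, Or.inl hx⟩]
    simp [hf, hxE]
  rw [map_mul, map_inv, h1] at h2
  simpa using h2

/-- In an infinite symmetric group, a proper subgroup has infinite index, which is encoded as `0`. -/
lemma index_eq_zero_of_infinite {Ω : Type*} [Infinite Ω] (H : Subgroup (Equiv.Perm Ω))
    (hH : H ≠ ⊤) : H.index = 0 := by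
  by_contra h0
  have : Finite (Equiv.Perm Ω ⧸ H) := Nat.finite_of_card_ne_zero h0
  refine hH (eq_top_iff.mpr fun g _ => ?_)
  have h := hom_to_finite_trivial (MulAction.toPermHom (Equiv.Perm Ω) (Equiv.Perm Ω ⧸ H)) g
  have h2 := congrArg (fun σ => σ ((1 : Equiv.Perm Ω) : Equiv.Perm Ω ⧸ H)) h
  simp only [MulAction.toPermHom_apply, MulAction.toPerm_apply, Equiv.Perm.one_apply] at h2
  rw [MulAction.Quotient.smul_coe, eq_comm, QuotientGroup.eq] at h2
  simpa using h2

/-! ### Permutation groups containing a cycle of prime length -/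

lemma prime_sq_not_dvd_factorial {n p : ℕ} (hp : p.Prime) (h : n < 2 * p) :
    ¬ p ^ 2 ∣ n.factorial := by
  have hlog : Nat.log p n < 2 := by
    apply Nat.log_lt_of_lt_pow' (by norm_num)
    nlinarith [hp.two_le]
  rw [hp.pow_dvd_factorial_iff hlog]
  have : n / p < 2 := Nat.div_lt_of_lt_mul (by linarith)
  simpa using this

lemma isPreprimitive_fixingSubgroup_of_prime_cycle {α : Type*} [Fintype α] [DecidableEq α]
    {G : Subgroup (Equiv.Perm α)} {σ : Equiv.Perm α} {p : ℕ} (hp : p.Prime) (hσ : σ.IsCycle)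
    (hσp : σ.support.card = p) (hσG : σ ∈ G) :
    IsPreprimitive (fixingSubgroup G ((σ.support)ᶜ : Set α))
      (SubMulAction.ofFixingSubgroup G ((σ.support)ᶜ : Set α)) := by
  have := Equiv.Perm.isPretransitive_of_isCycle_mem hσ hσG
  apply IsPreprimitive.of_prime_card
  convert! hp
  classical
  rw [Nat.card_eq_fintype_card, Fintype.card_subtype, ← hσp]
  apply congr_arg
  ext x
  simp [SubMulAction.mem_ofFixingSubgroup_iff]

/-- A primitive group with a cycle of prime length `p` induces the full symmetric group on any set of
`n - p` points. -/
lemma isPretransitive_of_prime_cycle {α : Type*} [Fintype α] [DecidableEq α]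
    {G : Subgroup (Equiv.Perm α)} (hG : IsPreprimitive G α) {σ : Equiv.Perm α} {p : ℕ}
    (hp : p.Prime) (hn : p + 3 ≤ Fintype.card α) (hσ : σ.IsCycle) (hσp : σ.support.card = p)
    (hσG : σ ∈ G) : IsMultiplyPretransitive G α (Fintype.card α - p) := by
  obtain ⟨n, hm⟩ := Nat.exists_eq_add_of_le hn
  have hsc : Set.ncard ((σ.support)ᶜ : Set α) = (n + 2) + 1 := by
    apply Nat.add_left_cancel (n := p)
    rw [← hσp, ← Set.ncard_coe_finset, Set.ncard_add_ncard_compl, Set.ncard_coe_finset, hσp,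
      Nat.card_eq_fintype_card]
    omega
  have hprim := isPreprimitive_fixingSubgroup_of_prime_cycle hp hσ hσp hσG
  have h1 : IsMultiplyPreprimitive G α (n + 2 + 2) := by
    refine hG.isMultiplyPreprimitive hsc ?_ hprim
    rw [Nat.card_eq_fintype_card]
    have := hp.two_le
    omega
  have h2 : IsMultiplyPretransitive G α (n + 2 + 2) :=
    IsMultiplyPreprimitive.isMultiplyPretransitive ..
  have := hp.two_le
  refine isMultiplyPretransitive_of_le (n := n + 2 + 2) (by omega) ?_
  rw [Nat.card_eq_fintype_card]
  omega

/-- The Frattini argument: an element `g` of `G` preserving the fixed-point set of `σ` can be corrected,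
without changing its action on this set, to an element normalizing `⟨σ⟩`. Indeed `⟨σ⟩` and its
conjugate by `g` are Sylow subgroups of the pointwise stabilizer of the fixed points, as `p ^ 2`
does not divide `n!`. -/
lemma exists_conj_mem_zpowers {α : Type*} [Fintype α] [DecidableEq α]
    {G : Subgroup (Equiv.Perm α)} {σ g : Equiv.Perm α} {p : ℕ}
    (hp : p.Prime) (hn : Fintype.card α < 2 * p) (hσo : orderOf σ = p)
    (hσG : σ ∈ G) (hg : g ∈ G) (hgs : ∀ x, σ x = x → σ (g x) = g x) :
    ∃ g' ∈ G, (∀ x, σ x = x → g' x = g x) ∧ g' * σ * g'⁻¹ ∈ Subgroup.zpowers σ := by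
  have : Fact p.Prime := ⟨hp⟩
  let Δ : Set α := {x | σ x = x}
  have hgs' : ∀ x, σ x = x → σ (g⁻¹ x) = g⁻¹ x := by
    have hpow : ∀ k : ℕ, ∀ x, σ x = x → σ ((g ^ k) x) = (g ^ k) x := by
      intro k
      induction k with
      | zero => intro x hx; simpa using hx
      | succ k ih =>
        intro x hx
        rw [pow_succ', Equiv.Perm.mul_apply]
        exact hgs _ (ih x hx)
    rw [← eq_inv_of_mul_eq_one_left
      ((pow_sub_one_mul (orderOf_pos g).ne' g).trans (pow_orderOf_eq_one g))]
    exact hpow _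
  let K : Subgroup (Equiv.Perm α) := G ⊓ fixingSubgroup (Equiv.Perm α) Δ
  have hK : ∀ {k}, k ∈ K ↔ k ∈ G ∧ ∀ x, σ x = x → k x = x := by
    intro k
    simp [K, Subgroup.mem_inf, mem_fixingSubgroup_iff, Δ]
  have hτ : g * σ * g⁻¹ ∈ K := by
    refine hK.2 ⟨G.mul_mem (G.mul_mem hg hσG) (G.inv_mem hg), fun x hx => ?_⟩
    rw [Equiv.Perm.mul_apply, Equiv.Perm.mul_apply, hgs' x hx, ← Equiv.Perm.mul_apply,
      mul_inv_cancel, Equiv.Perm.one_apply]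
  have hσK : σ ∈ K := hK.2 ⟨hσG, fun x hx => hx⟩
  have key : ∀ τ : K, orderOf τ = p → ∃ P : Sylow p K, (P : Subgroup K) = Subgroup.zpowers τ := by
    intro τ hτ
    have hc : Nat.card (Subgroup.zpowers τ) = p ^ 1 := by rw [Nat.card_zpowers, hτ, pow_one]
    refine ⟨(IsPGroup.of_card hc).toSylow ?_, rfl⟩
    rintro ⟨c, hc'⟩
    apply prime_sq_not_dvd_factorial hp hn
    have h1 := (Subgroup.zpowers τ).index_mul_card
    rw [hc, hc'] at h1
    have h2 : Nat.card K ∣ (Fintype.card α).factorial := by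
      rw [← Nat.card_eq_fintype_card, ← Nat.card_perm]
      exact Subgroup.card_subgroup_dvd_card K
    refine dvd_trans ⟨c, ?_⟩ h2
    rw [← h1]; ring
  obtain ⟨P, hP⟩ := key ⟨σ, hσK⟩ (by rw [Subgroup.orderOf_mk, hσo])
  obtain ⟨Q, hQ⟩ := key ⟨_, hτ⟩ (by
    rw [Subgroup.orderOf_mk, ← hσo]; exact (MulAut.conj g).orderOf_eq σ)
  obtain ⟨⟨k, hk⟩, hkQ⟩ := exists_smul_eq K Q P
  refine ⟨k * g, G.mul_mem (hK.1 hk).1 hg, fun x hx => (hK.1 hk).2 _ (hgs x hx), ?_⟩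
  have h1 : (⟨k, hk⟩ : K) * ⟨_, hτ⟩ * (⟨k, hk⟩ : K)⁻¹ ∈ (P : Subgroup K) := by
    rw [← hkQ, Sylow.coe_subgroup_smul, hQ]
    have := Subgroup.smul_mem_pointwise_smul (⟨_, hτ⟩ : K) (MulAut.conj (⟨k, hk⟩ : K)) _
      (Subgroup.mem_zpowers _)
    simpa using this
  rw [hP, Subgroup.mem_zpowers_iff] at h1
  obtain ⟨z, hz⟩ := h1
  refine Subgroup.mem_zpowers_iff.2 ⟨z, ?_⟩
  have := congrArg Subtype.val hz
  simp at this
  rw [this]; group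

open Equiv Equiv.Perm in
/-- A case of Jordan's theorem: a primitive group containing a cycle of prime length `p` with
`n / 2 < p ≤ n - 3` contains the alternating group. All permutations of the fixed points of `σ` are
realized by elements of `G` normalizing `⟨σ⟩`. Since the automorphism group of `⟨σ⟩` is abelian, the
commutator of two of them centralizes `σ`, so it is a `3`-cycle times a power of `σ`, and its `p`-th
power is a `3`-cycle. -/
lemma jordan_prime_cycle {α : Type*} [Fintype α] [DecidableEq α]
    {G : Subgroup (Equiv.Perm α)} (hG : IsPreprimitive G α) {σ : Equiv.Perm α} {p : ℕ}
    (hp : p.Prime) (hp5 : 5 ≤ p) (hn2 : Fintype.card α < 2 * p) (hn : p + 3 ≤ Fintype.card α)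
    (hσ : σ.IsCycle) (hσp : σ.support.card = p)
    (hσG : σ ∈ G) : alternatingGroup α ≤ G := by
  have htr := isPretransitive_of_prime_cycle hG hp hn hσ hσp hσG
  rw [isMultiplyPretransitive_iff] at htr
  have hcard : σ.supportᶜ.card = Fintype.card α - p := by rw [Finset.card_compl, hσp]
  have hlift : ∀ π : Perm α, (∀ x, σ x = x → σ (π x) = π x) → ∃ g ∈ G, (∀ x, σ x = x → g x = π x) ∧
      g * σ * g⁻¹ ∈ Subgroup.zpowers σ := by
    intro π hπ
    let e := (Finset.equivFinOfCardEq hcard).symm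
    let x : Fin (Fintype.card α - p) ↪ α := e.toEmbedding.trans (Function.Embedding.subtype _)
    obtain ⟨⟨g, hg⟩, h⟩ := htr x (x.trans π.toEmbedding)
    have hgx : ∀ x, σ x = x → g x = π x := by
      intro y hy
      have := DFunLike.congr_fun h (e.symm ⟨y, by simpa using hy⟩)
      simpa [x] using this
    obtain ⟨g', hg', h1, h2⟩ := exists_conj_mem_zpowers hp hn2 (hσp ▸ hσ.orderOf) hσG hg
      (fun y hy => by rw [hgx y hy]; exact hπ y hy)
    exact ⟨g', hg', fun y hy => by rw [h1 y hy, hgx y hy], h2⟩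
  obtain ⟨a, b, c, ha, hb, hc, hab, hac, hbc⟩ := Finset.two_lt_card_iff.1
    (show 2 < σ.supportᶜ.card by omega)
  rw [Finset.mem_compl, notMem_support] at ha hb hc
  have hsw : ∀ a b, σ a = a → σ b = b → ∀ x, σ x = x → σ (swap a b x) = swap a b x := by
    intro a b ha hb x hx
    rw [swap_apply_def]; split_ifs <;> assumption
  obtain ⟨g₁, hg₁, h₁, hz₁⟩ := hlift (swap a b) (hsw a b ha hb)
  obtain ⟨g₂, hg₂, h₂, hz₂⟩ := hlift (swap a c) (hsw a c ha hc)
  set s₁ := swap a b with hs₁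
  set s₂ := swap a c with hs₂
  set ρ := s₁ * s₂ * (s₁ * s₂) with hρ
  have hρ3 : ρ.IsThreeCycle := (isThreeCycle_swap_mul_swap_same hab hac hbc).isThreeCycle_sq
  set u := g₁ * g₂ with hu
  set v := g₂ * g₁ with hv
  set w := v⁻¹ * u with hw
  have hwG : w ∈ G := G.mul_mem (G.inv_mem (G.mul_mem hg₂ hg₁)) (G.mul_mem hg₁ hg₂)
  have hss₁ : ∀ x, s₁ (s₁ x) = x := fun x => by simp [hs₁]
  have hss₂ : ∀ x, s₂ (s₂ x) = x := fun x => by simp [hs₂]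
  -- on the fixed points of `σ` the element `w` acts as the 3-cycle `ρ`
  have hwρ : ∀ x, σ x = x → w x = ρ x := by
    intro x hx
    have e₁ := hsw a b ha hb
    have e₂ := hsw a c ha hc
    rw [hw, Perm.mul_apply, Perm.inv_eq_iff_eq]
    simp only [hu, hv, hρ, Perm.mul_apply]
    have f1 := e₂ x hx
    have f2 := e₁ _ f1
    have f3 := e₂ _ f2
    have f4 := e₁ _ f3
    rw [h₂ x hx, h₁ _ f1, h₁ _ f4, hss₁, h₂ _ f3, hss₂]
  -- and it commutes with `σ`
  have hwσ : Commute w σ := by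
    obtain ⟨z₁, hz₁⟩ := Subgroup.mem_zpowers_iff.1 hz₁
    obtain ⟨z₂, hz₂⟩ := Subgroup.mem_zpowers_iff.1 hz₂
    have e1 : u * σ * u⁻¹ = σ ^ (z₁ * z₂) := by
      rw [zpow_mul, hz₁, conj_zpow, hz₂]; simp only [hu]; group
    have e2 : v * σ * v⁻¹ = σ ^ (z₁ * z₂) := by
      rw [mul_comm, zpow_mul, hz₂, conj_zpow, hz₁]; simp only [hv]; group
    have e3 : u * σ = v * σ * v⁻¹ * u := by rw [e2, ← e1]; group
    change w * σ = σ * w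
    rw [hw, mul_assoc, e3]; group
  obtain ⟨x₀, hx₀, hcyc⟩ := id hσ
  have hwx₀ : σ (w x₀) ≠ w x₀ := by
    rw [← Perm.mul_apply, ← hwσ.eq, Perm.mul_apply]
    exact fun h => hx₀ (w.injective h)
  obtain ⟨k, hk⟩ := hcyc hwx₀
  have hρfix : ∀ x, σ x ≠ x → ρ x = x := by
    intro x hx
    have hxa : x ≠ a := by rintro rfl; exact hx ha
    have hxb : x ≠ b := by rintro rfl; exact hx hb
    have hxc : x ≠ c := by rintro rfl; exact hx hc
    simp [hρ, hs₁, hs₂, swap_apply_of_ne_of_ne, hxa, hxb, hxc]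
  clear_value w ρ
  have hρσ : Perm.Disjoint ρ (σ ^ k) := by
    have : Perm.Disjoint ρ σ := fun x => by
      by_cases hx : σ x = x
      · exact Or.inr hx
      · exact Or.inl (hρfix x hx)
    simpa using this.zpow_disjoint_zpow 1 k
  have hwk : w = ρ * σ ^ k := by
    ext1 x
    by_cases hx : σ x = x
    · rw [hwρ x hx, Perm.mul_apply, zpow_apply_eq_self_of_apply_eq_self hx]
    · obtain ⟨j, rfl⟩ := hcyc hx
      have e : w ((σ ^ j) x₀) = (σ ^ k) ((σ ^ j) x₀) := by
        rw [← Perm.mul_apply, (hwσ.zpow_right j).eq, Perm.mul_apply, ← hk, ← Perm.mul_apply,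
          ← Perm.mul_apply, ← zpow_add, ← zpow_add, add_comm]
      rw [Perm.mul_apply, e, hρfix]
      rw [← e, ← Perm.mul_apply, ← hwσ.eq, Perm.mul_apply]
      exact fun h => hx (w.injective h)
  have hσ1 : σ ^ p = 1 := by rw [← hσp, ← hσ.orderOf, pow_orderOf_eq_one]
  have hwp : w ^ p = ρ ^ p := by
    rw [hwk, hρσ.commute.mul_pow, ← zpow_natCast (σ ^ k), zpow_comm, zpow_natCast, hσ1, one_zpow,
      mul_one]
  have hρ1 : ρ ^ 3 = 1 := by rw [← hρ3.orderOf, pow_orderOf_eq_one]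
  have hwp3 : (w ^ p).IsThreeCycle := by
    rw [hwp, ← Nat.div_add_mod p 3, pow_add, pow_mul, hρ1, one_pow, one_mul]
    have : p % 3 ≠ 0 := by
      intro h
      have := (Nat.prime_dvd_prime_iff_eq Nat.prime_three hp).1 (Nat.dvd_of_mod_eq_zero h)
      omega
    have h3 : p % 3 = 1 ∨ p % 3 = 2 := by omega
    rcases h3 with h3 | h3 <;> rw [h3]
    · rwa [pow_one]
    · rw [pow_two]; exact hρ3.isThreeCycle_sq
  exact alternatingGroup_le_of_isPreprimitive_of_isThreeCycle_mem hG hwp3 (G.pow_mem hwG p)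

/-- A block system with more than one block would restrict to one on the support of the cycle, which
has prime cardinality and contains more than half of the points. -/
lemma isPreprimitive_of_prime_cycle {α : Type*} [Fintype α] [DecidableEq α]
    {G : Subgroup (Equiv.Perm α)} [IsPretransitive G α] {σ : Equiv.Perm α} {p : ℕ} (hp : p.Prime)
    (hn2 : Fintype.card α < 2 * p) (hσ : σ.IsCycle)
    (hσp : σ.support.card = p) (hσG : σ ∈ G) : IsPreprimitive G α := by
  have := isPreprimitive_fixingSubgroup_of_prime_cycle hp hσ hσp hσG
  let f : SubMulAction.ofFixingSubgroup G ((σ.support)ᶜ : Set α)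
      →ₑ[(fixingSubgroup G ((σ.support)ᶜ : Set α)).subtype] α :=
    { toFun := Subtype.val, map_smul' := fun _ _ => rfl }
  refine IsPreprimitive.of_card_lt (f := f) ?_
  have hr : Set.range f = (σ.support : Set α) := by
    change Set.range Subtype.val = _
    rw [Subtype.range_val]
    ext x
    simp [SubMulAction.mem_ofFixingSubgroup_iff]
  rw [hr, Set.ncard_coe_finset, hσp, Nat.card_eq_fintype_card]
  exact hn2

open scoped Pointwise in
/-- The set `s` is the complement of the orbit containing the support of a `p`-cycle of `G`. -/
lemma alternatingGroup_le_or_le_stabilizer {α : Type*} [Fintype α] [DecidableEq α]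
    {G : Subgroup (Equiv.Perm α)} {p : ℕ} (hp : p.Prime) (hp5 : 5 ≤ p)
    (hn2 : Fintype.card α < 2 * p) (hn : p + 3 ≤ Fintype.card α) (hpG : p ∣ Nat.card G) :
    alternatingGroup α ≤ G ∨ ∃ s : Finset α, 1 ≤ s.card ∧ s.card ≤ Fintype.card α - p ∧
      G ≤ stabilizer (Equiv.Perm α) s := by
  have : Fact p.Prime := ⟨hp⟩
  classical
  obtain ⟨⟨σ, hσG⟩, hσ⟩ := exists_prime_orderOf_dvd_card' p hpG
  rw [Subgroup.orderOf_mk] at hσ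
  have hcyc : σ.IsCycle := Equiv.Perm.isCycle_of_prime_order' (hσ ▸ hp) (hσ ▸ hn2)
  have hσp : σ.support.card = p := by rw [← hcyc.orderOf, hσ]
  obtain ⟨a, ha, hc⟩ := id hcyc
  by_cases ht : orbit G a = Set.univ
  · left
    have : IsPretransitive G α := by
      rw [isPretransitive_iff]
      intro x y
      obtain ⟨g, rfl⟩ : x ∈ orbit G a := ht ▸ Set.mem_univ x
      obtain ⟨h, rfl⟩ : y ∈ orbit G a := ht ▸ Set.mem_univ y
      exact ⟨h * g⁻¹, by simp [mul_smul]⟩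
    exact jordan_prime_cycle (isPreprimitive_of_prime_cycle hp hn2 hcyc hσp hσG) hp hp5 hn2 hn
      hcyc hσp hσG
  · right
    have hsupp : σ.support ⊆ (orbit G a).toFinset := by
      intro x hx
      obtain ⟨i, hi⟩ := hc (Equiv.Perm.mem_support.1 hx)
      rw [Set.mem_toFinset]
      exact ⟨⟨σ ^ i, G.zpow_mem hσG i⟩, hi⟩
    have h1 := Finset.card_le_card hsupp
    refine ⟨(orbit G a).toFinsetᶜ, ?_, ?_, fun g hg => ?_⟩
    · rw [Nat.one_le_iff_ne_zero, Finset.card_ne_zero, Finset.nonempty_iff_ne_empty, Ne,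
        Finset.compl_eq_empty_iff, Set.toFinset_eq_univ]
      exact ht
    · rw [Finset.card_compl]; omega
    · rw [mem_stabilizer_finset]
      intro b
      simp only [Finset.mem_compl, Set.mem_toFinset, not_iff_not]
      rw [← orbit_eq_iff, ← orbit_eq_iff, ← orbit_smul (⟨g, hg⟩ : G) b]
      rfl

lemma isMultiplyPretransitive_of_alternatingGroup_le {α : Type*} [Fintype α] [DecidableEq α]
    {Γ : Subgroup (Equiv.Perm α)} (hΓ : alternatingGroup α ≤ Γ) {j : ℕ}
    (hj : j + 2 ≤ Fintype.card α) : IsMultiplyPretransitive Γ α j := by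
  have h1 := alternatingGroup.isMultiplyPretransitive α
  have h2 : IsMultiplyPretransitive (alternatingGroup α) α j :=
    isMultiplyPretransitive_of_le (n := Nat.card α - 2)
      (by rw [Nat.card_eq_fintype_card]; omega) (Nat.sub_le _ _)
  rw [isMultiplyPretransitive_iff] at h2 ⊢
  intro x y
  obtain ⟨g, hg⟩ := h2 x y
  exact ⟨⟨g, hΓ g.2⟩, hg⟩

open scoped Pointwise in
lemma index_stabilizer_finset {α : Type*} [Fintype α] [DecidableEq α]
    {Γ : Subgroup (Equiv.Perm α)} (hΓ : alternatingGroup α ≤ Γ) (s : Finset α)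
    (hj : s.card + 2 ≤ Fintype.card α) :
    (stabilizer Γ s).index = (Fintype.card α).choose s.card := by
  have h1 := isMultiplyPretransitive_of_alternatingGroup_le hΓ hj
  have h2 : IsPretransitive Γ (Set.powersetCard α s.card) :=
    Set.powersetCard.isPretransitive_of_isMultiplyPretransitive _ h1
  have h3 := index_stabilizer_of_transitive Γ
    (⟨s, Set.powersetCard.mem_iff.2 rfl⟩ : Set.powersetCard α s.card)
  rw [Set.powersetCard.card, Nat.card_eq_fintype_card] at h3
  rw [← h3]
  congr 1
  ext g
  rw [mem_stabilizer_iff, mem_stabilizer_iff]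
  exact ⟨fun h => Subtype.ext h, fun h => congrArg Subtype.val h⟩

lemma two_mul_card_alternatingGroup_dvd {α : Type*} [Fintype α] [DecidableEq α] [Nontrivial α]
    {Γ : Subgroup (Equiv.Perm α)} (hΓ : alternatingGroup α ≤ Γ) :
    (Fintype.card α).factorial ∣ 2 * Nat.card Γ := by
  obtain ⟨c, hc⟩ := Subgroup.card_dvd_of_le hΓ
  have := two_mul_nat_card_alternatingGroup (α := α)
  rw [Nat.card_perm, Nat.card_eq_fintype_card (α := α)] at this
  rw [hc, ← mul_assoc, this]
  exact dvd_mul_right _ _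

lemma dvd_index_or_choose_dvd_index {α : Type*} [Fintype α] [DecidableEq α]
    {Γ : Subgroup (Equiv.Perm α)} (hΓ : alternatingGroup α ≤ Γ) (K : Subgroup Γ)
    (hK : ¬ alternatingGroup α ≤ K.map Γ.subtype) {p : ℕ} (hp : p.Prime) (hp5 : 5 ≤ p)
    (hn2 : Fintype.card α < 2 * p) (hn : p + 3 ≤ Fintype.card α) :
    p ∣ K.index ∨ ∃ j, 1 ≤ j ∧ j ≤ Fintype.card α - p ∧ (Fintype.card α).choose j ∣ K.index := by
  by_cases hpi : p ∣ K.index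
  · exact Or.inl hpi
  right
  have : Nontrivial α := by rw [← Fintype.one_lt_card_iff_nontrivial]; omega
  have h1 : p ∣ 2 * Nat.card Γ :=
    (hp.dvd_factorial.2 (by omega)).trans (two_mul_card_alternatingGroup_dvd hΓ)
  have h2 : p ∣ Nat.card Γ := by
    refine (hp.dvd_mul.1 h1).resolve_left fun h => ?_
    have := Nat.le_of_dvd (by norm_num) h
    omega
  rw [← K.index_mul_card, hp.dvd_mul] at h2
  have h3 : p ∣ Nat.card (K.map Γ.subtype) := by
    rw [Subgroup.card_map_of_injective Γ.subtype_injective]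
    exact h2.resolve_left hpi
  obtain h | ⟨s, hs1, hs2, hs⟩ := alternatingGroup_le_or_le_stabilizer hp hp5 hn2 hn h3
  · exact absurd h hK
  · refine ⟨s.card, hs1, hs2, ?_⟩
    rw [← index_stabilizer_finset hΓ s (by omega)]
    refine Subgroup.index_dvd_of_le fun k hk => ?_
    exact hs (Subgroup.mem_map_of_mem Γ.subtype hk)

lemma index_dvd_factorial {α : Type*} [Fintype α] [DecidableEq α]
    {Γ : Subgroup (Equiv.Perm α)} (K : Subgroup Γ) :
    K.index ∣ (Fintype.card α).factorial := by
  rw [← Nat.card_eq_fintype_card, ← Nat.card_perm]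
  exact (Subgroup.index_dvd_card K).trans (Subgroup.card_subgroup_dvd_card Γ)

open Equiv.Perm in
/-- A subgroup of index at most `2` contains all squares, in particular all `3`-cycles. -/
lemma three_le_index {α : Type*} [Fintype α] [DecidableEq α]
    {Γ : Subgroup (Equiv.Perm α)} (hΓ : alternatingGroup α ≤ Γ) (K : Subgroup Γ)
    (hK : ¬ alternatingGroup α ≤ K.map Γ.subtype) : 3 ≤ K.index := by
  by_contra! h
  apply hK
  have h0 : K.index ≠ 0 := K.index_ne_zero_of_finite
  -- the square of every element of `Γ` lies in `K`
  have hsq : ∀ g : Γ, g * g ∈ K := by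
    intro g
    have h12 : K.index = 1 ∨ K.index = 2 := by omega
    rcases h12 with h1 | h2
    · rw [Subgroup.index_eq_one.1 h1]; trivial
    · exact Subgroup.mul_self_mem_of_index_two h2 g
  rw [← closure_three_cycles_eq_alternating, Subgroup.closure_le]
  intro c hc
  have hc' : c.IsThreeCycle := hc
  have hcA : c * c ∈ Γ := hΓ (hc'.isThreeCycle_sq.mem_alternatingGroup)
  refine ⟨_, hsq ⟨_, hcA⟩, ?_⟩
  have : c ^ 3 = 1 := by rw [← hc'.orderOf, pow_orderOf_eq_one]
  change c * c * (c * c) = c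
  rw [← mul_assoc, ← pow_two, ← pow_succ, this, one_mul]

/-- If the index `m` were less than `n`, the simple group `A_n` would act faithfully on the `m` cosets
of `K`, which contradicts `n! / 2 > m!`. -/
lemma card_le_index {α : Type*} [Fintype α] [DecidableEq α]
    {Γ : Subgroup (Equiv.Perm α)} (hΓ : alternatingGroup α ≤ Γ) (K : Subgroup Γ)
    (hK : ¬ alternatingGroup α ≤ K.map Γ.subtype) (hn : 5 ≤ Fintype.card α) :
    Fintype.card α ≤ K.index := by
  by_contra! h
  have : Nontrivial α := by rw [← Fintype.one_lt_card_iff_nontrivial]; omega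
  have hsimple : IsSimpleGroup (alternatingGroup α) :=
    alternatingGroup.isSimpleGroup (by rwa [Nat.card_eq_fintype_card])
  let φ : alternatingGroup α →* Equiv.Perm (Γ ⧸ K) :=
    (MulAction.toPermHom Γ (Γ ⧸ K)).comp (Subgroup.inclusion hΓ)
  have hker : φ.ker = ⊥ := by
    refine (hsimple.eq_bot_or_eq_top_of_normal φ.ker inferInstance).resolve_right fun htop => ?_
    apply hK
    intro g hg
    have h1 : (⟨g, hg⟩ : alternatingGroup α) ∈ φ.ker := htop ▸ Subgroup.mem_top _
    have h2 := congrArg (fun σ => σ ((1 : Γ) : Γ ⧸ K)) (MonoidHom.mem_ker.1 h1)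
    change (((⟨g, hΓ hg⟩ : Γ) * 1 : Γ) : Γ ⧸ K) = ((1 : Γ) : Γ ⧸ K) at h2
    rw [eq_comm, QuotientGroup.eq] at h2
    exact ⟨⟨g, hΓ hg⟩, by simpa using h2, rfl⟩
  have hinj : Function.Injective φ := (MonoidHom.ker_eq_bot_iff φ).1 hker
  have h1 := Nat.card_le_card_of_injective φ hinj
  have h2 := two_mul_nat_card_alternatingGroup (α := α)
  rw [Nat.card_perm] at h1 h2
  change _ ≤ K.index.factorial at h1
  rw [Nat.card_eq_fintype_card (α := α)] at h2
  obtain ⟨m, hm⟩ : ∃ m, Fintype.card α = m + 1 := ⟨Fintype.card α - 1, by omega⟩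
  have h3 : K.index.factorial ≤ m.factorial := Nat.factorial_le (by omega)
  rw [hm, Nat.factorial_succ] at h2
  have := m.factorial_pos
  nlinarith

/-! ### Coset partitions of finite groups -/

/-- If `K` and `L` have coprime indices, then `Γ = K * L`: the group `K` acts transitively on `Γ ⧸ L`. -/
lemma exists_mem_mul_mem_of_coprime {Γ : Type*} [Group Γ] [Finite Γ] {K L : Subgroup Γ}
    (h : K.index.Coprime L.index) (x : Γ) : ∃ k ∈ K, k * x ∈ L := by
  have h1 : L.relIndex K * K.index = (L ⊓ K).index := by
    rw [← Subgroup.inf_relIndex_right, Subgroup.relIndex_mul_index inf_le_right]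
  have h2 : L.index ∣ L.relIndex K := by
    refine h.symm.dvd_of_dvd_mul_right ?_
    rw [h1]
    exact Subgroup.index_dvd_of_le inf_le_left
  have h3 : stabilizer K ((1 : Γ) : Γ ⧸ L) = L.subgroupOf K := by
    ext k
    rw [mem_stabilizer_iff, Subgroup.mem_subgroupOf]
    change (((k : Γ) * 1 : Γ) : Γ ⧸ L) = _ ↔ _
    rw [eq_comm, QuotientGroup.eq]
    simp
  have h4 : L.relIndex K = (orbit K ((1 : Γ) : Γ ⧸ L)).ncard := by
    rw [← index_stabilizer, h3]; rfl
  have h5 : orbit K ((1 : Γ) : Γ ⧸ L) = Set.univ := by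
    rw [Set.eq_univ_iff_ncard]
    refine le_antisymm (Set.ncard_le_card _) ?_
    rw [← h4]
    refine Nat.le_of_dvd (Nat.pos_of_ne_zero fun h0 => ?_) h2
    rw [h0, zero_mul] at h1
    exact Subgroup.index_ne_zero_of_finite h1.symm
  obtain ⟨k, hk⟩ : (x : Γ ⧸ L) ∈ orbit K ((1 : Γ) : Γ ⧸ L) := h5 ▸ Set.mem_univ _
  change (((k : Γ) * 1 : Γ) : Γ ⧸ L) = _ at hk
  rw [QuotientGroup.eq] at hk
  exact ⟨(k : Γ)⁻¹, K.inv_mem k.2, by simpa using hk⟩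

/-- The partition of `Γ` into the right cosets `K i * y i` is expressed by saying that each `g` satisfies
`g * (y i)⁻¹ ∈ K i` for exactly one `i`. -/
lemma not_coprime_of_partition {Γ ι : Type*} [Group Γ] [Finite Γ] {K : ι → Subgroup Γ}
    {y : ι → Γ} (h : ∀ g, ∃! i, g * (y i)⁻¹ ∈ K i) {i j : ι} (hij : i ≠ j) :
    ¬ (K i).index.Coprime (K j).index := by
  intro hc
  obtain ⟨k, hk, hkx⟩ := exists_mem_mul_mem_of_coprime hc (y i * (y j)⁻¹)
  exact hij ((h (k * y i)).unique (by simpa using hk) (by simpa [mul_assoc] using hkx))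

lemma sum_inv_index_of_partition {Γ ι : Type*} [Group Γ] [Finite Γ] [Fintype ι]
    {K : ι → Subgroup Γ} {y : ι → Γ} (h : ∀ g, ∃! i, g * (y i)⁻¹ ∈ K i) :
    ∑ i, ((K i).index : ℚ)⁻¹ = 1 := by
  have h1 : Nat.card (Σ i, K i) = Nat.card Γ := by
    refine Nat.card_eq_of_bijective (fun a : Σ i, K i => (a.2 : Γ) * y a.1) ⟨?_, fun g => ?_⟩
    · rintro ⟨i, k⟩ ⟨j, l⟩ hkl
      simp only at hkl
      have hij : i = j := (h (k * y i)).unique (by simp) (by rw [hkl]; simp)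
      subst hij
      rw [Subtype.ext (mul_right_cancel hkl)]
    · obtain ⟨i, hi, -⟩ := h g
      exact ⟨⟨i, ⟨_, hi⟩⟩, by simp⟩
  rw [Nat.card_sigma] at h1
  have h0 : (Nat.card Γ : ℚ) ≠ 0 := by exact_mod_cast Nat.card_pos.ne'
  have h2 : ∀ i, ((K i).index : ℚ)⁻¹ = Nat.card (K i) / Nat.card Γ := by
    intro i
    rw [← (K i).index_mul_card]
    have := (K i).index_ne_zero_of_finite
    have h3 : Nat.card (K i) ≠ 0 := Nat.card_pos.ne'
    push_cast
    field_simp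
  rw [Finset.sum_congr rfl fun i _ => h2 i, ← Finset.sum_div, ← h1]
  rw [← h1] at h0
  push_cast at h0 ⊢
  exact div_self h0

/-! ### The restrictions on the set of indices -/

/-- The arithmetic properties of the set `D` of indices of a coset partition, with distinct indices, of
a group between `A_n` and `S_n` by cosets of subgroups not containing `A_n`. -/
structure IndexSet (n : ℕ) (D : Finset ℕ) : Prop where
  dvd : ∀ d ∈ D, d ∣ n.factorial
  three_le : ∀ d ∈ D, 3 ≤ d
  le : 5 ≤ n → ∀ d ∈ D, n ≤ d
  not_coprime : ∀ d ∈ D, ∀ e ∈ D, d ≠ e → ¬ d.Coprime e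
  prime : ∀ p : ℕ, p.Prime → 5 ≤ p → n < 2 * p → p + 3 ≤ n → ∀ d ∈ D,
    p ∣ d ∨ ∃ j, 1 ≤ j ∧ j ≤ n - p ∧ n.choose j ∣ d
  sum : ∑ d ∈ D, (d : ℚ)⁻¹ = 1

lemma indexSet_of_partition {α ι : Type*} [Fintype α] [DecidableEq α] [Fintype ι]
    {Γ : Subgroup (Equiv.Perm α)} (hΓ : alternatingGroup α ≤ Γ) {K : ι → Subgroup Γ} {y : ι → Γ}
    (h : ∀ g, ∃! i, g * (y i)⁻¹ ∈ K i) (hK : ∀ i, ¬ alternatingGroup α ≤ (K i).map Γ.subtype)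
    (hinj : Function.Injective fun i => (K i).index) :
    IndexSet (Fintype.card α) (Finset.univ.image fun i => (K i).index) := by
  constructor
  · simp only [Finset.mem_image, Finset.mem_univ, true_and, forall_exists_index,
      forall_apply_eq_imp_iff]
    exact fun i => index_dvd_factorial _
  · simp only [Finset.mem_image, Finset.mem_univ, true_and, forall_exists_index,
      forall_apply_eq_imp_iff]
    exact fun i => three_le_index hΓ _ (hK i)
  · simp only [Finset.mem_image, Finset.mem_univ, true_and, forall_exists_index,
      forall_apply_eq_imp_iff]
    exact fun hn i => card_le_index hΓ _ (hK i) hn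
  · simp only [Finset.mem_image, Finset.mem_univ, true_and, forall_exists_index,
      forall_apply_eq_imp_iff]
    exact fun i j hij => not_coprime_of_partition h fun e => hij (e ▸ rfl)
  · simp only [Finset.mem_image, Finset.mem_univ, true_and, forall_exists_index,
      forall_apply_eq_imp_iff]
    exact fun p hp hp5 hn2 hn i => dvd_index_or_choose_dvd_index hΓ _ (hK i) hp hp5 hn2 hn
  · rw [Finset.sum_image fun i _ j _ hij => hinj hij]
    exact sum_inv_index_of_partition h

/-! ### A prime between `n / 2` and `n - 3` -/

/-- The real inequality behind the existence of a prime in `(m, 2 * m]` other than `2 * m - 1`.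
Taking logarithms makes the difference of the two sides a concave function of `x`, which is
nonnegative at `18` and nonpositive at `512`. -/
lemma real_prime_inequality {x : ℝ} (hx : 512 ≤ x) :
    x * (2 * x) * (2 * x) ^ √(2 * x) * 4 ^ (2 * x / 3) ≤ 4 ^ x := by
  let f : ℝ → ℝ := fun x =>
    Real.log x + Real.log (2 * x) + √(2 * x) * Real.log (2 * x) - Real.log 4 / 3 * x
  have hf' : ∀ x : ℝ, 0 < x → 0 < x * (2 * x) * (2 * x) ^ √(2 * x) / 4 ^ (x / 3) := fun x h => by
    positivity
  have hf : ∀ x, 0 < x → f x = Real.log (x * (2 * x) * (2 * x) ^ √(2 * x) / 4 ^ (x / 3)) := by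
    intro x h5
    have h6 : 0 < 2 * x := by positivity
    have h7 := Real.rpow_pos_of_pos h6 (√(2 * x))
    rw [Real.log_div (by positivity) (by positivity), Real.log_mul (by positivity) h7.ne',
      Real.log_mul h5.ne' h6.ne', Real.log_rpow h6, Real.log_rpow (by norm_num)]
    simp only [f]
    ring
  have h5 : 0 < x := lt_of_lt_of_le (by norm_num1) hx
  rw [← div_le_one (Real.rpow_pos_of_pos four_pos x), ← div_div_eq_mul_div,
    ← Real.rpow_sub four_pos, ← mul_div 2 x, mul_div_left_comm, ← mul_one_sub,
    (by norm_num1 : (1 : ℝ) - 2 / 3 = 1 / 3),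
    mul_one_div, ← Real.log_nonpos_iff (hf' x h5).le, ← hf x h5]
  have hlog : ConcaveOn ℝ (Set.Ioi 0.5) Real.log :=
    strictConcaveOn_log_Ioi.concaveOn.subset (Set.Ioi_subset_Ioi (by norm_num))
      (convex_Ioi 0.5)
  have h : ConcaveOn ℝ (Set.Ioi 0.5) f := by
    apply ConcaveOn.sub
    · apply ConcaveOn.add
      · apply hlog.add
        have h1 := (hlog.add (concaveOn_const (Real.log 2) (convex_Ioi 0.5)))
        refine h1.congr fun x hx => ?_
        have : (0 : ℝ) < x := lt_trans (by norm_num) hx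
        simp only [Pi.add_apply]
        rw [Real.log_mul two_ne_zero this.ne', add_comm]
      convert!
        ((strictConcaveOn_sqrt_mul_log_Ioi.concaveOn.comp_linearMap ((2 : ℝ) • LinearMap.id)))
        using 1
      ext x
      simp only [Set.mem_Ioi, Set.mem_preimage, LinearMap.smul_apply,
        LinearMap.id_coe, id_eq, smul_eq_mul]
      rw [← mul_lt_mul_iff_right₀ (two_pos)]
      norm_num1
      rfl
    apply ConvexOn.smul
    · refine div_nonneg (Real.log_nonneg (by norm_num1)) (by norm_num1)
    · exact convexOn_id (convex_Ioi (0.5 : ℝ))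
  suffices ∃ x1 x2, 0.5 < x1 ∧ x1 < x2 ∧ x2 ≤ x ∧ 0 ≤ f x1 ∧ f x2 ≤ 0 by
    obtain ⟨x1, x2, h1, h2, h0, h3, h4⟩ := this
    exact (h.right_le_of_le_left'' h1 ((h1.trans h2).trans_le h0) h2 h0 (h4.trans h3)).trans h4
  refine ⟨18, 512, by norm_num1, by norm_num1, hx, ?_, ?_⟩
  · have : √(2 * 18 : ℝ) = 6 :=
      (Real.sqrt_eq_iff_mul_self_eq_of_pos (by norm_num1)).mpr (by norm_num1)
    rw [hf _ (by norm_num1), Real.log_nonneg_iff (by positivity), this, one_le_div (by norm_num1)]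
    norm_num1
  · have : √(2 * 512 : ℝ) = 32 :=
      (Real.sqrt_eq_iff_mul_self_eq_of_pos (by norm_num1)).mpr (by norm_num1)
    rw [hf _ (by norm_num1), Real.log_nonpos_iff (hf' _ (by norm_num1)).le, this,
        div_le_one (by positivity)]
    have e4 : (4 : ℝ) = 2 ^ (2 : ℝ) := by norm_num
    have e1 : (512 : ℝ) * (2 * 512) * (2 * 512) ^ (32 : ℝ) = 2 ^ (339 : ℝ) := by
      rw [show (32 : ℝ) = ((32 : ℕ) : ℝ) by norm_num, show (339 : ℝ) = ((339 : ℕ) : ℝ) by norm_num,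
        Real.rpow_natCast, Real.rpow_natCast, show (2 : ℝ) * 512 = 2 ^ 10 by norm_num1,
        show (512 : ℝ) = 2 ^ 9 by norm_num1, ← pow_mul, ← pow_add, ← pow_add]
    rw [e1, e4, ← Real.rpow_mul (by norm_num)]
    exact Real.rpow_le_rpow_of_exponent_le (by norm_num1) (by norm_num1)

lemma nat_prime_inequality {m : ℕ} (hm : 512 ≤ m) :
    m * (2 * m) * (2 * m) ^ Nat.sqrt (2 * m) * 4 ^ (2 * m / 3) ≤ 4 ^ m := by
  rw [← @Nat.cast_le ℝ]
  simp only [Nat.cast_mul, Nat.cast_pow, ← Real.rpow_natCast, Nat.cast_ofNat]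
  refine _root_.trans ?_ (real_prime_inequality (by exact_mod_cast hm))
  gcongr
  · have n2_pos : 0 < 2 * m := by positivity
    exact mod_cast n2_pos
  · exact_mod_cast Real.nat_sqrt_le_real_sqrt
  · norm_num1
  · exact Nat.cast_div_le.trans (by norm_cast)

/-- If `2 * m - 1` is the only prime that may lie in `(m, 2 * m]`, then the central binomial
coefficient is small: its prime divisors exceeding `2 * m / 3` contribute at most the factor
`2 * m`. -/
lemma centralBinom_le_of_no_prime {m : ℕ} (hm : 512 ≤ m)
    (h : ∀ p : ℕ, p.Prime → m < p → p ≤ 2 * m → p = 2 * m - 1) :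
    m.centralBinom ≤ (2 * m) * (2 * m) ^ Nat.sqrt (2 * m) * 4 ^ (2 * m / 3) := by
  have hm1 : 0 < 2 * m := by omega
  have hsq : Nat.sqrt (2 * m) ≤ 2 * m / 3 := by
    rw [Nat.le_div_iff_mul_le (by norm_num)]
    have := Nat.sqrt_le (2 * m)
    have h3 : 3 ≤ Nat.sqrt (2 * m) := Nat.le_sqrt.2 (by omega)
    nlinarith
  set c := m.centralBinom.factorization with hc
  let P : Finset ℕ := (Finset.range (2 * m + 1)).filter Nat.Prime
  have e : m.centralBinom = ∏ p ∈ P, p ^ c p := by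
    rw [← Nat.prod_pow_factorization_centralBinom m]
    refine (Finset.prod_filter_of_ne fun p _ hp => ?_).symm
    contrapose! hp
    rw [Nat.factorization_eq_zero_of_not_prime _ hp, pow_zero]
  have hbig : ∏ p ∈ P with 2 * m / 3 < p, p ^ c p ≤ 2 * m := by
    have hsub : ∏ p ∈ P with 2 * m / 3 < p, p ^ c p ≤ ∏ p ∈ {2 * m - 1}, p := by
      calc ∏ p ∈ P with 2 * m / 3 < p, p ^ c p
          = ∏ p ∈ (P.filter (2 * m / 3 < ·)).filter (· = 2 * m - 1), p ^ c p := by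
            refine (Finset.prod_filter_of_ne fun p hp hp1 => ?_).symm
            simp only [P, Finset.mem_filter, Finset.mem_range] at hp
            by_contra hne
            refine hp1 ?_
            have hpm : p ≤ m := by
              by_contra hpm
              exact hne (h p hp.1.2 (by omega) (by omega))
            rw [hc, Nat.factorization_centralBinom_of_two_mul_self_lt_three_mul (by omega) hpm
              (by omega), pow_zero]
        _ ≤ ∏ p ∈ (P.filter (2 * m / 3 < ·)).filter (· = 2 * m - 1), p := by
            refine Finset.prod_le_prod' fun p hp => ?_
            simp only [P, Finset.mem_filter, Finset.mem_range] at hp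
            have : c p ≤ 1 := Nat.factorization_choose_le_one (Nat.sqrt_lt'.1 (by omega))
            exact (Nat.pow_le_pow_right hp.1.1.2.pos this).trans (pow_one p).le
        _ ≤ _ := by
            refine Finset.prod_le_prod_of_subset_of_one_le' (fun p hp => ?_) fun p hp _ => ?_
            · simpa using (Finset.mem_filter.1 hp).2
            · simp only [Finset.mem_singleton] at hp
              omega
    rw [Finset.prod_singleton] at hsub
    omega
  have hmid : ∏ p ∈ P with ¬ 2 * m / 3 < p, p ^ c p ≤
      (2 * m) ^ Nat.sqrt (2 * m) * 4 ^ (2 * m / 3) := by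
    rw [← Finset.prod_filter_mul_prod_filter_not _ (· ≤ Nat.sqrt (2 * m))]
    apply mul_le_mul'
    · refine (Finset.prod_le_prod' fun p _ =>
        (Nat.pow_factorization_choose_le hm1 : p ^ c p ≤ 2 * m)).trans ?_
      rw [Finset.prod_const]
      refine pow_right_mono₀ hm1 ?_
      have hcard : (Finset.Icc 1 (Nat.sqrt (2 * m))).card = Nat.sqrt (2 * m) := by
        rw [Nat.card_Icc, Nat.add_sub_cancel]
      refine (Finset.card_le_card fun p hp => ?_).trans hcard.le
      simp only [P, Finset.mem_filter] at hp
      exact Finset.mem_Icc.2 ⟨hp.1.1.2.one_lt.le, hp.2⟩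
    · refine le_trans ?_ (primorial_le_four_pow (2 * m / 3))
      refine (Finset.prod_le_prod' fun p hp => (?_ : p ^ c p ≤ p)).trans ?_
      · simp only [P, Finset.mem_filter] at hp
        have : c p ≤ 1 := Nat.factorization_choose_le_one (Nat.sqrt_lt'.1 (by omega))
        exact (Nat.pow_le_pow_right hp.1.1.2.pos this).trans (pow_one p).le
      · refine Finset.prod_le_prod_of_subset_of_one_le' (fun p hp => ?_) fun p hp _ => ?_
        · simp only [P, Finset.mem_filter, Finset.mem_range] at hp ⊢
          exact ⟨by omega, hp.1.1.2⟩
        · exact (Finset.mem_filter.1 hp).2.one_lt.le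
  rw [e, ← Finset.prod_filter_mul_prod_filter_not _ (2 * m / 3 < ·), mul_assoc]
  exact mul_le_mul' hbig hmid

lemma exists_prime_of_large {m : ℕ} (hm : 512 ≤ m) :
    ∃ p : ℕ, p.Prime ∧ m < p ∧ p ≤ 2 * m ∧ p ≠ 2 * m - 1 := by
  have h1 := Nat.four_pow_lt_mul_centralBinom m (by omega)
  contrapose! h1
  calc m * m.centralBinom
      ≤ m * ((2 * m) * (2 * m) ^ Nat.sqrt (2 * m) * 4 ^ (2 * m / 3)) :=
        Nat.mul_le_mul_left _ (centralBinom_le_of_no_prime hm h1)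
    _ = m * (2 * m) * (2 * m) ^ Nat.sqrt (2 * m) * 4 ^ (2 * m / 3) := by ring
    _ ≤ 4 ^ m := nat_prime_inequality hm

/-- A strengthening of Bertrand's postulate: for `n ≥ 8` there is a prime `p` with
`n / 2 < p ≤ n - 3`. -/
lemma exists_prime_add_three_le {n : ℕ} (hn : 8 ≤ n) :
    ∃ p : ℕ, p.Prime ∧ 5 ≤ p ∧ n < 2 * p ∧ p + 3 ≤ n := by
  rcases lt_or_ge n 1024 with h | h
  · by_cases h1 : n < 10
    · exact ⟨5, by norm_num, by omega⟩
    by_cases h2 : n < 14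
    · exact ⟨7, by norm_num, by omega⟩
    by_cases h3 : n < 22
    · exact ⟨11, by norm_num, by omega⟩
    by_cases h4 : n < 34
    · exact ⟨17, by norm_num, by omega⟩
    by_cases h5 : n < 58
    · exact ⟨29, by norm_num, by omega⟩
    by_cases h6 : n < 106
    · exact ⟨53, by norm_num, by omega⟩
    by_cases h7 : n < 202
    · exact ⟨101, by norm_num, by omega⟩
    by_cases h8 : n < 394
    · exact ⟨197, by norm_num, by omega⟩
    by_cases h9 : n < 778
    · exact ⟨389, by norm_num, by omega⟩
    · exact ⟨773, by norm_num, by omega⟩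
  · obtain ⟨p, hp, h1, h2, h3⟩ := exists_prime_of_large (m := n / 2) (by omega)
    -- the even numbers `2 * (n / 2)` and `2 * (n / 2) - 2` are not prime
    have hodd := hp.eq_two_or_odd
    exact ⟨p, hp, by omega⟩

/-! ### No set of integers satisfies the restrictions -/

lemma IndexSet.sum_factorial_div {n : ℕ} {D : Finset ℕ} (h : IndexSet n D) :
    ∑ d ∈ D, n.factorial / d = n.factorial := by
  have h1 : ∑ d ∈ D, ((n.factorial / d : ℕ) : ℚ) = n.factorial := by
    have h2 := congrArg ((n.factorial : ℚ) * ·) h.sum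
    simp only [mul_one, Finset.mul_sum] at h2
    rw [← h2]
    refine Finset.sum_congr rfl fun d hd => ?_
    have hd0 : (d : ℚ) ≠ 0 := by
      have := h.three_le d hd
      positivity
    rw [Nat.cast_div (h.dvd d hd) hd0, div_eq_mul_inv]
  exact_mod_cast h1

lemma IndexSet.not_sum_lt {n : ℕ} {D E : Finset ℕ} (h : IndexSet n D) (hDE : D ⊆ E) :
    ¬ ∑ d ∈ E, n.factorial / d < n.factorial := by
  rw [not_lt]
  exact h.sum_factorial_div.symm.le.trans (Finset.sum_le_sum_of_subset hDE)

/-- Once `a` is an index, the indices coprime to `a` are excluded; if the remaining candidates have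
too small a sum of reciprocals, then `a` is not an index. -/
lemma IndexSet.subset_erase {n : ℕ} {D E : Finset ℕ} (h : IndexSet n D) (hDE : D ⊆ E) (a : ℕ)
    (ha : ∑ d ∈ E with d = a ∨ ¬ a.Coprime d, n.factorial / d < n.factorial) :
    D ⊆ E.erase a := by
  intro d hd
  refine Finset.mem_erase.2 ⟨?_, hDE hd⟩
  rintro rfl
  refine h.not_sum_lt (fun e he => ?_) ha
  refine Finset.mem_filter.2 ⟨hDE he, ?_⟩
  by_cases hde : e = d
  · exact Or.inl hde
  · exact Or.inr (h.not_coprime d hd e he (Ne.symm hde))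

lemma IndexSet.subset_divisors {n : ℕ} {D : Finset ℕ} (h : IndexSet n D) :
    D ⊆ {d ∈ n.factorial.divisors | 3 ≤ d ∧ (5 ≤ n → n ≤ d)} := fun d hd =>
  Finset.mem_filter.2 ⟨Nat.mem_divisors.2 ⟨h.dvd d hd, n.factorial_ne_zero⟩,
    h.three_le d hd, fun hn => h.le hn d hd⟩

lemma not_indexSet_of_le_seven {n : ℕ} (hn : 3 ≤ n) (hn7 : n ≤ 7) (D : Finset ℕ) :
    ¬ IndexSet n D := by
  intro h
  have h0 := h.subset_divisors
  interval_cases n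
  · exact h.not_sum_lt h0 (by decide +kernel)
  · have h1 := h.subset_erase h0 3 (by decide +kernel)
    exact h.not_sum_lt h1 (by decide +kernel)
  · exact h.not_sum_lt h0 (by decide +kernel)
  · have h1 := h.subset_erase h0 8 (by decide +kernel)
    exact h.not_sum_lt h1 (by decide +kernel)
  · have h1 := h.subset_erase h0 7 (by decide +kernel)
    have h2 := h.subset_erase h1 8 (by decide +kernel)
    have h3 := h.subset_erase h2 9 (by decide +kernel)
    have h4 := h.subset_erase h3 10 (by decide +kernel)
    exact h.not_sum_lt h4 (by decide +kernel)

lemma sum_inv_le_of_eq_mul {A B : Finset ℕ} {c : ℕ} (hc : c ≠ 0)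
    (h : ∀ d ∈ A, ∃ e ∈ B, d = c * e) :
    ∑ d ∈ A, (d : ℝ)⁻¹ ≤ (c : ℝ)⁻¹ * ∑ e ∈ B, (e : ℝ)⁻¹ := by
  have hsub : A ⊆ B.image (c * ·) := fun d hd => by
    obtain ⟨e, he, rfl⟩ := h d hd
    exact Finset.mem_image_of_mem _ he
  refine (Finset.sum_le_sum_of_subset_of_nonneg hsub fun _ _ _ => by positivity).trans_eq ?_
  rw [Finset.sum_image fun _ _ _ _ => Nat.eq_of_mul_eq_mul_left (Nat.pos_of_ne_zero hc),
    Finset.mul_sum]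
  simp [mul_comm]

/-- Every index is `p * e` with `1 ≠ e ∣ n! / p`, or `n.choose i * e` with `i ∈ J` and
`e ∣ n! / p`; comparing with `∑ d⁻¹ = 1` gives a lower bound on the sum `S` of the reciprocals of
the divisors of `n! / p`. -/
lemma IndexSet.one_le {n : ℕ} {D : Finset ℕ} (h : IndexSet n D) {p : ℕ} (hp : p.Prime)
    (hp5 : 5 ≤ p) (hn2 : n < 2 * p) (hpn : p + 3 ≤ n) {J : Finset ℕ} (hJn : ∀ i ∈ J, i ≤ n)
    (hJ : ∀ j, 1 ≤ j → j ≤ n - p → ∃ i ∈ J, n.choose i ∣ n.choose j) {S : ℝ}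
    (hS : ∑ e ∈ (n.factorial / p).divisors, (e : ℝ)⁻¹ ≤ S) :
    1 ≤ (S - 1) / p + S * ∑ i ∈ J, (n.choose i : ℝ)⁻¹ := by
  set M := n.factorial / p with hM
  have hpM : p * M = n.factorial := Nat.mul_div_cancel' (hp.dvd_factorial.2 (by omega))
  have hM0 : M ≠ 0 := by
    intro h0
    rw [h0, mul_zero] at hpM
    exact n.factorial_ne_zero hpM.symm
  have h1 : ∑ d ∈ D with p ∣ d, (d : ℝ)⁻¹ ≤ (p : ℝ)⁻¹ * ∑ e ∈ M.divisors.erase 1, (e : ℝ)⁻¹ := by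
    refine sum_inv_le_of_eq_mul hp.ne_zero fun d hd => ?_
    obtain ⟨hd, e, rfl⟩ := Finset.mem_filter.1 hd
    refine ⟨e, Finset.mem_erase.2 ⟨?_, Nat.mem_divisors.2 ⟨?_, hM0⟩⟩, rfl⟩
    · rintro rfl
      have := h.le (by omega) _ hd
      omega
    · have := h.dvd _ hd
      rw [← hpM] at this
      exact Nat.dvd_of_mul_dvd_mul_left hp.pos this
  have h2 : ∑ d ∈ D with ¬ p ∣ d, (d : ℝ)⁻¹ ≤
      ∑ i ∈ J, (n.choose i : ℝ)⁻¹ * ∑ e ∈ M.divisors, (e : ℝ)⁻¹ := by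
    calc ∑ d ∈ D with ¬ p ∣ d, (d : ℝ)⁻¹
        ≤ ∑ d ∈ D with ¬ p ∣ d, ∑ i ∈ J with n.choose i ∣ d, (d : ℝ)⁻¹ := by
          refine Finset.sum_le_sum fun d hd => ?_
          obtain ⟨hd, hpd⟩ := Finset.mem_filter.1 hd
          obtain hc | ⟨j, hj1, hj2, hj⟩ := h.prime p hp hp5 hn2 hpn d hd
          · exact absurd hc hpd
          · obtain ⟨i, hi, hij⟩ := hJ j hj1 hj2
            exact Finset.single_le_sum (f := fun _ => (d : ℝ)⁻¹) (fun _ _ => by positivity)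
              (Finset.mem_filter.2 ⟨hi, hij.trans hj⟩)
      _ = ∑ i ∈ J, ∑ d ∈ (D.filter (¬ p ∣ ·)).filter (n.choose i ∣ ·), (d : ℝ)⁻¹ := by
          simp only [Finset.sum_filter (s := J), Finset.sum_filter (s := D.filter (¬ p ∣ ·))]
          exact Finset.sum_comm
      _ ≤ _ := by
          refine Finset.sum_le_sum fun i hi => ?_
          refine sum_inv_le_of_eq_mul (Nat.choose_pos (hJn i hi)).ne' fun d hd => ?_
          simp only [Finset.mem_filter] at hd
          obtain ⟨⟨hd, hpd⟩, e, rfl⟩ := hd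
          refine ⟨e, Nat.mem_divisors.2 ⟨?_, hM0⟩, rfl⟩
          have h3 := h.dvd _ hd
          rw [← hpM] at h3
          exact (dvd_mul_left _ _).trans
            (((hp.coprime_iff_not_dvd.2 hpd).symm.dvd_of_dvd_mul_left) h3)
  have hsum : ∑ d ∈ D, (d : ℝ)⁻¹ = 1 := by
    have := congrArg (Rat.cast : ℚ → ℝ) h.sum
    push_cast at this
    exact this
  have he : ∑ e ∈ M.divisors.erase 1, (e : ℝ)⁻¹ = ∑ e ∈ M.divisors, (e : ℝ)⁻¹ - 1 := by
    rw [Finset.sum_erase_eq_sub (Nat.mem_divisors.2 ⟨one_dvd _, hM0⟩)]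
    simp
  rw [← Finset.sum_filter_add_sum_filter_not D (p ∣ ·)] at hsum
  have hp0 : (0 : ℝ) < p := by exact_mod_cast hp.pos
  refine hsum.symm.le.trans (add_le_add (h1.trans ?_) (h2.trans ?_))
  · rw [he, div_eq_inv_mul]
    gcongr
  · rw [← Finset.sum_mul, mul_comm]
    gcongr

/-- The sum of the reciprocals of the divisors of `M` is a partial sum of an Euler product. -/
lemma sum_inv_divisors_le {M : ℕ} {P : Finset ℕ} (hP : ∀ q ∈ P, q.Prime)
    (h : ∀ q, q.Prime → q ∣ M → q ∈ P) :
    ∑ e ∈ M.divisors, (e : ℝ)⁻¹ ≤ ∏ q ∈ P, (1 - (q : ℝ)⁻¹)⁻¹ := by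
  let f : ℕ →* ℝ := ⟨⟨fun m => (m : ℝ)⁻¹, by simp⟩, fun a b => by simp [mul_comm]⟩
  have hf : ∀ {q : ℕ}, q.Prime → ‖f q‖ < 1 := fun {q} hq => by
    have h1 : (1 : ℝ) < q := by exact_mod_cast hq.one_lt
    change ‖(q : ℝ)⁻¹‖ < 1
    rw [norm_inv, Real.norm_natCast]
    exact inv_lt_one_of_one_lt₀ h1
  have h1 := (EulerProduct.summable_and_hasSum_factoredNumbers_prod_filter_prime_geometric hf P).2
  rw [Finset.filter_true_of_mem hP] at h1
  have hmem : ∀ e : M.divisors, (e : ℕ) ∈ Nat.factoredNumbers P := by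
    intro e
    rw [Nat.mem_factoredNumbers]
    obtain ⟨he, hM⟩ := Nat.mem_divisors.1 e.2
    refine ⟨ne_zero_of_dvd_ne_zero hM he, fun q hq => ?_⟩
    exact h q (Nat.prime_of_mem_primeFactorsList hq)
      ((Nat.dvd_of_mem_primeFactorsList hq).trans he)
  obtain ⟨g, hg⟩ : ∃ g : M.divisors ↪ Nat.factoredNumbers P, ∀ e, (g e : ℕ) = e :=
    ⟨⟨fun e => ⟨e, hmem e⟩, fun a b hab => Subtype.ext (Subtype.mk.inj hab)⟩, fun _ => rfl⟩
  calc ∑ e ∈ M.divisors, (e : ℝ)⁻¹ = ∑ e ∈ Finset.univ.map g, f e := by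
        rw [Finset.sum_map, ← Finset.sum_coe_sort]
        exact Finset.sum_congr rfl fun e _ => by rw [hg]; rfl
    _ ≤ _ := sum_le_hasSum _ (fun e _ => inv_nonneg.2 (Nat.cast_nonneg _)) h1

lemma IndexSet.one_le_prod {n : ℕ} {D : Finset ℕ} (h : IndexSet n D) {p : ℕ} (hp : p.Prime)
    (hp5 : 5 ≤ p) (hn2 : n < 2 * p) (hpn : p + 3 ≤ n) (J P : Finset ℕ) (hJn : ∀ i ∈ J, i ≤ n)
    (hJ : ∀ j ∈ Finset.Icc 1 (n - p), ∃ i ∈ J, n.choose i ∣ n.choose j)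
    (hP : ∀ q ∈ P, q.Prime)
    (hP' : ∀ q ∈ Finset.range (n + 1), q.Prime → q = p ∨ q ∈ P) :
    1 ≤ (∏ q ∈ P, (1 - (q : ℚ)⁻¹)⁻¹ - 1) / p +
      (∏ q ∈ P, (1 - (q : ℚ)⁻¹)⁻¹) * ∑ i ∈ J, (n.choose i : ℚ)⁻¹ := by
  suffices h1 : (1 : ℝ) ≤ (∏ q ∈ P, (1 - (q : ℝ)⁻¹)⁻¹ - 1) / p +
      (∏ q ∈ P, (1 - (q : ℝ)⁻¹)⁻¹) * ∑ i ∈ J, (n.choose i : ℝ)⁻¹ by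
    rw [← Rat.cast_le (K := ℝ)]
    push_cast
    exact h1
  refine h.one_le hp hp5 hn2 hpn hJn (fun j h1 h2 => hJ j (Finset.mem_Icc.2 ⟨h1, h2⟩))
    (sum_inv_divisors_le hP fun q hq hqM => ?_)
  have hpM : p * (n.factorial / p) = n.factorial :=
    Nat.mul_div_cancel' (hp.dvd_factorial.2 (by omega))
  have hqn : q ≤ n := (hq.dvd_factorial).1 (hqM.trans ⟨p, by rw [mul_comm, hpM]⟩)
  refine (hP' q (Finset.mem_range.2 (by omega)) hq).resolve_left ?_
  rintro rfl
  refine prime_sq_not_dvd_factorial hp hn2 ?_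
  rw [← hpM, sq]
  exact mul_dvd_mul_left _ hqM

lemma not_indexSet_of_le_twentyfour {n : ℕ} (hn : 8 ≤ n) (hn' : n ≤ 24) (D : Finset ℕ) :
    ¬ IndexSet n D := by
  intro h
  have key : ∀ p, p.Prime → 5 ≤ p → n < 2 * p → p + 3 ≤ n → ∀ P : Finset ℕ,
      (∀ q ∈ P, q.Prime) → (∀ q ∈ Finset.range (n + 1), q.Prime → q = p ∨ q ∈ P) →
      ¬ (∏ q ∈ P, (1 - (q : ℚ)⁻¹)⁻¹ - 1) / p + (∏ q ∈ P, (1 - (q : ℚ)⁻¹)⁻¹) *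
        ∑ i ∈ Finset.Icc 1 (n - p), (n.choose i : ℚ)⁻¹ < 1 := fun p hp hp5 h2 h3 P hP hP' =>
    not_lt.2 (h.one_le_prod hp hp5 h2 h3 _ P
      (fun i hi => by have := Finset.mem_Icc.1 hi; omega) (fun j hj => ⟨j, hj, dvd_rfl⟩) hP hP')
  have key7 := key 7 (by norm_num) (by norm_num)
  have key11 := key 11 (by norm_num) (by norm_num)
  have key17 := key 17 (by norm_num) (by norm_num)
  interval_cases n
  · -- the Euler product is not sharp enough for `n = 8`, where the divisor sum is computed exactly
    have hS : ∑ e ∈ (Nat.factorial 8 / 5).divisors, (e : ℝ)⁻¹ ≤ ((33 / 10 : ℚ) : ℝ) := by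
      have : ∑ e ∈ (Nat.factorial 8 / 5).divisors, (e : ℚ)⁻¹ ≤ 33 / 10 := by decide +kernel
      have := (Rat.cast_le (K := ℝ)).2 this
      push_cast at this ⊢
      exact this
    have h1 := h.one_le (p := 5) (J := {1, 2}) (by norm_num) (by norm_num)
      (by norm_num) (by norm_num) (by decide)
      (fun j h1 h2 => by interval_cases j <;> decide) hS
    norm_num [Nat.choose] at h1
  · have h1 := h.one_le_prod (p := 5) (by norm_num) (by norm_num) (by norm_num) (by norm_num)
      {1, 3} {2, 3, 7} (by decide) (by decide) (by decide) (by decide)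
    exact absurd h1 (by decide +kernel)
  · exact key7 (by norm_num) (by norm_num) {2, 3, 5}
      (by decide) (by decide) (by decide +kernel)
  · exact key7 (by norm_num) (by norm_num) {2, 3, 5, 11}
      (by decide) (by decide) (by decide +kernel)
  · exact key7 (by norm_num) (by norm_num) {2, 3, 5, 11}
      (by decide) (by decide) (by decide +kernel)
  · exact key7 (by norm_num) (by norm_num) {2, 3, 5, 11, 13}
      (by decide) (by decide) (by decide +kernel)
  · exact key11 (by norm_num) (by norm_num) {2, 3, 5, 7, 13}
      (by decide) (by decide) (by decide +kernel)
  · exact key11 (by norm_num) (by norm_num) {2, 3, 5, 7, 13}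
      (by decide) (by decide) (by decide +kernel)
  · exact key11 (by norm_num) (by norm_num) {2, 3, 5, 7, 13}
      (by decide) (by decide) (by decide +kernel)
  · exact key11 (by norm_num) (by norm_num) {2, 3, 5, 7, 13, 17}
      (by decide) (by decide) (by decide +kernel)
  · exact key11 (by norm_num) (by norm_num) {2, 3, 5, 7, 13, 17}
      (by decide) (by decide) (by decide +kernel)
  · exact key11 (by norm_num) (by norm_num) {2, 3, 5, 7, 13, 17, 19}
      (by decide) (by decide) (by decide +kernel)
  · exact key17 (by norm_num) (by norm_num) {2, 3, 5, 7, 11, 13, 19}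
      (by decide) (by decide) (by decide +kernel)
  · exact key17 (by norm_num) (by norm_num) {2, 3, 5, 7, 11, 13, 19}
      (by decide) (by decide) (by decide +kernel)
  · exact key17 (by norm_num) (by norm_num) {2, 3, 5, 7, 11, 13, 19}
      (by decide) (by decide) (by decide +kernel)
  · exact key17 (by norm_num) (by norm_num) {2, 3, 5, 7, 11, 13, 19, 23}
      (by decide) (by decide) (by decide +kernel)
  · exact key17 (by norm_num) (by norm_num) {2, 3, 5, 7, 11, 13, 19, 23}
      (by decide) (by decide) (by decide +kernel)

/-- Passing from `n` to `n + 1` multiplies the product by `1` or by `(n + 1) / n`, so its quotient by `n`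
does not increase. -/
lemma prod_primesBelow_le {n : ℕ} (hn : 25 ≤ n) :
    ∏ q ∈ (n + 1).primesBelow, (1 - (q : ℚ)⁻¹)⁻¹ ≤ n / 4 := by
  induction n, hn using Nat.le_induction with
  | base => decide +kernel
  | succ n hn ih =>
    have hn0 : (0 : ℚ) < n := by exact_mod_cast (by omega : 0 < n)
    have h1 : (0 : ℚ) ≤ n / 4 := by positivity
    have h2 : (1 - ((n + 1 : ℕ) : ℚ)⁻¹)⁻¹ = (n + 1) / n := by
      have h3 : (1 : ℚ) - (n + 1 : ℚ)⁻¹ = n / (n + 1) := by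
        field_simp
        ring
      push_cast
      rw [h3, inv_div]
    by_cases hp : (n + 1).Prime
    · rw [Nat.primesBelow_succ, if_pos hp, Finset.prod_insert (by simp [Nat.primesBelow]), h2]
      calc (n + 1 : ℚ) / n * _ ≤ (n + 1 : ℚ) / n * (n / 4) := by gcongr
        _ = ((n + 1 : ℕ) : ℚ) / 4 := by
          push_cast
          field_simp
    · rw [Nat.primesBelow_succ, if_neg hp]
      push_cast
      linarith

/-- Here `n - p < n / 2`, so all the terms but the first are at most `(n.choose 2)⁻¹`. -/
lemma sum_inv_choose_le {n p : ℕ} (hp : n < 2 * p) (hpn : p + 3 ≤ n) :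
    ∑ i ∈ Finset.Icc 1 (n - p), (n.choose i : ℚ)⁻¹ ≤ 2 / n := by
  have hn : (6 : ℚ) < n := by exact_mod_cast (by omega : 6 < n)
  have h2 : ∀ i, 2 ≤ i → i ≤ n / 2 → n.choose 2 ≤ n.choose i := by
    intro i hi
    induction i, hi using Nat.le_induction with
    | base => exact fun _ => le_rfl
    | succ i hi ih =>
      exact fun h => (ih (by omega)).trans (Nat.choose_le_succ_of_lt_half_left (by omega))
  rw [← Finset.sum_Ioc_add_eq_sum_Icc (by omega : 1 ≤ n - p)]
  have h3 : ∑ i ∈ Finset.Ioc 1 (n - p), (n.choose i : ℚ)⁻¹ ≤ 1 / n := by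
    calc ∑ i ∈ Finset.Ioc 1 (n - p), (n.choose i : ℚ)⁻¹
        ≤ ∑ i ∈ Finset.Ioc 1 (n - p), (n.choose 2 : ℚ)⁻¹ := by
          refine Finset.sum_le_sum fun i hi => ?_
          obtain ⟨h4, h5⟩ := Finset.mem_Ioc.1 hi
          have h6 : (0 : ℚ) < n.choose 2 := by exact_mod_cast Nat.choose_pos (by omega)
          have h7 : (n.choose 2 : ℚ) ≤ n.choose i := by exact_mod_cast h2 i h4 (by omega)
          gcongr
      _ = ((n - p - 1 : ℕ) : ℚ) * (2 / (n * (n - 1))) := by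
          rw [Finset.sum_const, Nat.card_Ioc, nsmul_eq_mul, Nat.cast_choose_two, inv_div]
      _ ≤ ((n - 1) / 2) * (2 / (n * (n - 1))) := by
          have h8 : ((n - p - 1 : ℕ) : ℚ) ≤ (n - 1) / 2 := by
            rw [le_div_iff₀ (by norm_num), le_sub_iff_add_le]
            exact_mod_cast (by omega : (n - p - 1) * 2 + 1 ≤ n)
          have h9 : (0 : ℚ) < n - 1 := by linarith
          gcongr
      _ = 1 / n := by
          have h9 : (n : ℚ) - 1 ≠ 0 := by linarith
          field_simp
  calc _ ≤ 1 / (n : ℚ) + (n.choose 1 : ℚ)⁻¹ := by gcongr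
    _ = 2 / n := by
      rw [Nat.choose_one_right]
      ring

lemma not_indexSet_of_large {n : ℕ} (hn : 25 ≤ n) (D : Finset ℕ) : ¬ IndexSet n D := by
  intro h
  obtain ⟨p, hp, hp5, hn2, hpn⟩ := exists_prime_add_three_le (by omega : 8 ≤ n)
  have h1 := h.one_le_prod hp hp5 hn2 hpn (Finset.Icc 1 (n - p)) (n + 1).primesBelow
    (fun i hi => by have := Finset.mem_Icc.1 hi; omega) (fun j hj => ⟨j, hj, dvd_rfl⟩)
    (fun q hq => Nat.prime_of_mem_primesBelow hq)
    (fun q hq hq' => Or.inr (Finset.mem_filter.2 ⟨hq, hq'⟩))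
  have h2 := prod_primesBelow_le hn
  have h3 := sum_inv_choose_le hn2 hpn
  have h4 : (1 : ℚ) ≤ ∏ q ∈ (n + 1).primesBelow, (1 - (q : ℚ)⁻¹)⁻¹ := by
    refine Finset.prod_const_one.symm.le.trans (Finset.prod_le_prod (fun _ _ => zero_le_one) fun q hq => ?_)
    have h5 : (1 : ℚ) < q := by exact_mod_cast (Nat.prime_of_mem_primesBelow hq).one_lt
    have h6 : (q : ℚ)⁻¹ < 1 := inv_lt_one_of_one_lt₀ h5
    have h7 : 0 < (q : ℚ)⁻¹ := by positivity
    exact (one_le_inv₀ (by linarith)).2 (by linarith)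
  set S := ∏ q ∈ (n + 1).primesBelow, (1 - (q : ℚ)⁻¹)⁻¹
  have hn0 : (0 : ℚ) < n := by exact_mod_cast (by omega : 0 < n)
  have hp2 : (S - 1) / p ≤ (S - 1) * (2 / n) := by
    rw [div_eq_mul_inv]
    have h5 : (n : ℚ) ≤ p * 2 := by exact_mod_cast (by omega : n ≤ p * 2)
    have h6 : (0 : ℚ) < p := by exact_mod_cast hp.pos
    refine mul_le_mul_of_nonneg_left ?_ (by linarith)
    rw [inv_le_comm₀ h6 (by positivity), inv_div]
    linarith
  have h8 : S * ∑ i ∈ Finset.Icc 1 (n - p), (n.choose i : ℚ)⁻¹ ≤ S * (2 / n) :=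
    mul_le_mul_of_nonneg_left h3 (by linarith)
  have h9 : (S - 1) * (2 / n) + S * (2 / n) = (4 * S - 2) / n := by ring
  have h10 : (4 * S - 2) / n < 1 := by
    rw [div_lt_one hn0]
    linarith
  linarith

lemma not_indexSet {n : ℕ} (hn : 3 ≤ n) (D : Finset ℕ) : ¬ IndexSet n D := by
  rcases le_or_gt n 7 with h7 | h7
  · exact not_indexSet_of_le_seven hn h7 D
  rcases le_or_gt n 24 with h24 | h24
  · exact not_indexSet_of_le_twentyfour h7 h24 D
  · exact not_indexSet_of_large h24 D

/-! ### Conclusion -/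

open Equiv.Perm in
/-- The case of a finite set with at least three elements. If some `H a` is the alternating group, the
other cosets all lie in the coset of `A_n` different from `H a * x a`; translating by some `x b` with
`b ≠ a` gives a partition of `A_n`, in which all indices are halved. -/
lemma not_partition_distinct_index {α ι : Type*} [Fintype α] [DecidableEq α] [Fintype ι]
    [Nontrivial ι]
    (hα : 3 ≤ Fintype.card α) {H : ι → Subgroup (Equiv.Perm α)} {x : ι → Equiv.Perm α}
    (hH : ∀ i, H i ≠ ⊤) (h : ∀ g, ∃! i, g * (x i)⁻¹ ∈ H i)
    (hinj : Function.Injective fun i => (H i).index) : False := by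
  classical
  have : Nontrivial α := by rw [← Fintype.one_lt_card_iff_nontrivial]; omega
  by_cases hA : ∃ i, H i = alternatingGroup α
  · obtain ⟨a, ha⟩ := hA
    obtain ⟨b, hba⟩ := exists_ne a
    let Γ := alternatingGroup α
    have hsign : ∀ i, i ≠ a → ∀ g, g * (x i)⁻¹ ∈ H i → sign g = - sign (x a) := by
      intro i hi g hg
      have h1 : g * (x a)⁻¹ ∉ H a := fun h2 => hi ((h g).unique hg h2)
      rw [ha, mem_alternatingGroup, Equiv.Perm.sign_mul, Equiv.Perm.sign_inv] at h1
      rcases Int.units_eq_one_or (sign g) with e1 | e1 <;>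
        rcases Int.units_eq_one_or (sign (x a)) with e2 | e2 <;> simp_all
    have hsx : ∀ i, i ≠ a → sign (x i) = - sign (x a) := fun i hi => hsign i hi _ (by simp)
    have hle : ∀ i, i ≠ a → H i ≤ Γ := by
      intro i hi g hg
      have h1 := hsign i hi (g * x i) (by simpa using hg)
      rw [Equiv.Perm.sign_mul, hsx i hi] at h1
      exact mem_alternatingGroup.2 (by simpa using h1)
    let y : {i // i ≠ a} → Γ := fun i => ⟨x i * (x b)⁻¹, by
      rw [mem_alternatingGroup, Equiv.Perm.sign_mul, Equiv.Perm.sign_inv, hsx i i.2, hsx b hba]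
      rcases Int.units_eq_one_or (sign (x a)) with e2 | e2 <;> simp [e2]⟩
    have hpart : ∀ g : Γ, ∃! i : {i // i ≠ a}, g * (y i)⁻¹ ∈ (H i).subgroupOf Γ := by
      intro g
      have hy : ∀ i : {i // i ≠ a}, g * (y i)⁻¹ ∈ (H i).subgroupOf Γ ↔
          ((g : Equiv.Perm α) * x b) * (x i)⁻¹ ∈ H i := by
        intro i
        rw [Subgroup.mem_subgroupOf]
        simp [y, mul_assoc]
      obtain ⟨i, hi, hi'⟩ := h (g * x b)
      have hia : i ≠ a := by
        rintro rfl
        simp only [ha] at hi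
        rw [mem_alternatingGroup, Equiv.Perm.sign_mul, Equiv.Perm.sign_mul, Equiv.Perm.sign_inv, hsx b hba,
          mem_alternatingGroup.1 g.2] at hi
        rcases Int.units_eq_one_or (sign (x i)) with e2 | e2 <;> simp [e2] at hi
      refine ⟨⟨i, hia⟩, (hy _).2 hi, fun j hj => ?_⟩
      exact Subtype.ext (hi' _ ((hy j).1 hj))
    have hidx : ∀ i : {i // i ≠ a}, ((H i).subgroupOf Γ).index * Γ.index = (H i).index :=
      fun i => Subgroup.relIndex_mul_index (hle i i.2)
    refine not_indexSet hα _ (indexSet_of_partition le_rfl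
      (K := fun i : {i // i ≠ a} => (H i).subgroupOf Γ) hpart (fun i hi => ?_) fun i j hij => ?_)
    · rw [Subgroup.subgroupOf_map_subtype] at hi
      have h1 : H i = Γ := le_antisymm (hle i i.2) (hi.trans inf_le_left)
      exact i.2 (hinj (by simp only [h1, ha, Γ]))
    · refine Subtype.ext (hinj ?_)
      simp only at hij ⊢
      rw [← hidx i, ← hidx j, hij]
  · push Not at hA
    have hidx : ∀ i, ((H i).subgroupOf ⊤).index = (H i).index :=
      fun i => Subgroup.relIndex_top_right _
    refine not_indexSet hα _ (indexSet_of_partition (Γ := ⊤) le_top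
      (K := fun i => (H i).subgroupOf ⊤) (y := fun i => ⟨x i, trivial⟩)
      (fun g => ?_) (fun i hi => ?_) fun i j hij => ?_)
    · simpa [Subgroup.mem_subgroupOf] using h g
    · rw [Subgroup.subgroupOf_map_subtype, inf_top_eq] at hi
      have h2 : (H i).index ∣ 2 := by
        rw [← alternatingGroup.index_eq_two (α := α)]
        exact Subgroup.index_dvd_of_le hi
      rcases (Nat.dvd_prime Nat.prime_two).1 h2 with h1 | h2
      · exact hH i (Subgroup.index_eq_one.1 h1)
      · exact hA i (eq_alternatingGroup_of_index_eq_two h2)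
    · simp only [hidx] at hij
      exact hinj hij

end

/-- The Herzog–Schönheim conjecture holds for symmetric groups `Sym(Ω)`:
if `k ≥ 2` and the right cosets `H i * x i` of proper subgroups `H i` partition the group,
then two of the subgroups have the same index. -/
theorem herzog_schonheim_symmetric {Ω : Type*} (k : ℕ) (hk : 2 ≤ k)
    (H : Fin k → Subgroup (Equiv.Perm Ω)) (hprop : ∀ i, H i ≠ ⊤)
    (x : Fin k → Equiv.Perm Ω)
    (hcover : (⋃ i, (· * x i) '' (H i : Set (Equiv.Perm Ω))) = Set.univ)
    (hdisj : ∀ i j, i ≠ j →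
      ((· * x i) '' (H i : Set (Equiv.Perm Ω))) ∩ ((· * x j) '' (H j : Set (Equiv.Perm Ω))) = ∅) :
    ∃ i j, i ≠ j ∧ (H i).index = (H j).index := by
  classical
  have : Nontrivial (Fin k) := Fin.nontrivial_iff_two_le.2 hk
  obtain ⟨a, b, hab⟩ := exists_pair_ne (Fin k)
  rcases finite_or_infinite Ω with hfin | hinf
  · have := Fintype.ofFinite Ω
    have hmem : ∀ g i, g ∈ (· * x i) '' (H i : Set (Equiv.Perm Ω)) ↔ g * (x i)⁻¹ ∈ H i := by
      intro g i
      constructor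
      · rintro ⟨h, hh, rfl⟩
        simpa using hh
      · intro hg
        exact ⟨_, hg, by simp⟩
    have hpart : ∀ g, ∃! i, g * (x i)⁻¹ ∈ H i := by
      intro g
      have hg : g ∈ ⋃ i, (· * x i) '' (H i : Set (Equiv.Perm Ω)) := hcover ▸ Set.mem_univ g
      obtain ⟨i, hi⟩ := Set.mem_iUnion.1 hg
      refine ⟨i, (hmem g i).1 hi, fun j hj => ?_⟩
      by_contra hji
      have : g ∈ (∅ : Set (Equiv.Perm Ω)) := hdisj j i hji ▸ ⟨(hmem g j).2 hj, hi⟩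
      exact this
    rcases le_or_gt 3 (Fintype.card Ω) with h3 | h3
    · by_contra! hne
      exact not_partition_distinct_index h3 hprop hpart fun i j hij => by
        by_contra hij'
        exact hne i j hij' hij
    · -- a symmetric group of order at most two has no proper subgroup but the trivial one
      have hbot : ∀ i, H i = ⊥ := by
        intro i
        by_contra hi
        have : Nontrivial (H i) := (Subgroup.nontrivial_iff_ne_bot _).2 hi
        exact hprop i (Equiv.Perm.subgroup_eq_top_of_nontrivial
          (by rw [Nat.card_eq_fintype_card]; omega) this)
      exact ⟨a, b, hab, by rw [hbot a, hbot b]⟩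
  · exact ⟨a, b, hab, by
      rw [index_eq_zero_of_infinite _ (hprop a), index_eq_zero_of_infinite _ (hprop b)]⟩
end

section
/- Let n ≥ 19 be an integer and let M be a maximal subgroup of the alternating group A_n. Then either [A_n : M] = C(n,k) for some k ∈ {1,2,3}, where C(n,k) is the binomial coefficient, or [A_n : M] > n³/3. -/
/-!
Let `M` be a maximal subgroup of `A_n`, `n ≥ 19`. The proof distinguishes how `M` acts on the
`n` points, and uses two elementary lower bounds for the index of a subgroup `M ≤ A_n`:

* `factorial_le_two_mul_index`: if only the identity of `M` fixes every point outside `Γ`, then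
  `Alt(Γ)` meets `M` trivially, so `[A_n : M] ≥ |Γ|! / 2`;
* `choose_le_index_mul_ncard_orbit`: `A_n` is transitive on `k`-subsets, so
  `C(n, |S|) ≤ [A_n : M] · |M-orbit of S|` for every set `S` of points.

If `M` is intransitive, it fixes a set `S` with `1 ≤ |S| ≤ n/2`. For `|S| ≤ 3` maximality makes `M`
the stabilizer of `S`, of index `C(n, |S|)`; otherwise `[A_n : M] ≥ C(n, 4) > n³/3`.

If `M` is transitive and imprimitive, with `b` blocks of size `a`, three bounds together suffice.
For `a ≥ 5`, the second estimate with `S` a block gives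
`[A_n : M] ≥ C(n, a) / b = C(n - 1, a - 1) ≥ C(n - 1, 4)`. For `a ≤ 4` and `b ≥ 8`, the first
estimate with `Γ` a transversal of the blocks gives `b! / 2`. The cases left,
`(a, b) ∈ {(3, 7), (4, 5), (4, 6), (4, 7)}`, follow from the second estimate with `S` a union of
three blocks.

If `M` is primitive, Bochert's argument applies: a set `Γ` of maximal size to which the first
estimate applies has at least `n/2` points, since otherwise two elements of `M` whose supports
share exactly one point exist; their commutator is a 3-cycle, and Jordan's theorem gives `M = A_n`.
-/

open MulAction Equiv Equiv.Perm
open scoped Pointwise Nat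

/-! ### Two lower bounds for the index -/

section
variable {α : Type*} [Fintype α] [DecidableEq α]

/-- If the identity is the only element of `M` supported in `Γ`, then `Alt(Γ)` embeds in the cosets
of `M`. The factor `2` on the right also covers `|Γ| ≤ 1`, where `|Alt(Γ)| = |Γ|!`. -/
theorem factorial_le_two_mul_index (M : Subgroup (alternatingGroup α)) (Γ : Finset α)
    (h : ∀ g ∈ M, (∀ x ∉ Γ, g • x = x) → g = 1) : Γ.card ! ≤ 2 * M.index := by
  have h0 : 1 ≤ M.index := Nat.one_le_iff_ne_zero.mpr Subgroup.index_ne_zero_of_finite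
  rcases le_or_gt Γ.card 1 with h1 | h1
  · rw [Nat.factorial_eq_one.mpr h1]; omega
  have : Nontrivial Γ := by
    rw [← Fintype.one_lt_card_iff_nontrivial]; simpa using h1
  have hbot : M.comap (alternatingGroup.ofSubtype Γ) = ⊥ := by
    rw [eq_bot_iff]
    intro σ hσ
    rw [Subgroup.mem_comap] at hσ
    have := h _ hσ (fun x hx => Perm.ofSubtype_apply_of_not_mem _ hx)
    rw [Subgroup.mem_bot]
    exact alternatingGroup.ofSubtype_injective (by rw [this, map_one])
  have key : Nat.card (alternatingGroup Γ) ≤ M.index := by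
    rw [← Subgroup.index_bot, ← hbot, Subgroup.index_comap]
    exact (Subgroup.relIndex_le_of_le_right le_top
      (by rw [Subgroup.relIndex_top_right]; omega)).trans_eq (Subgroup.relIndex_top_right M)
  have := two_mul_nat_card_alternatingGroup (α := Γ)
  rw [Nat.card_perm, Nat.card_eq_fintype_card (α := Γ), Fintype.card_coe] at this
  omega

theorem index_stabilizer_finset_s10 (h3 : 3 ≤ Fintype.card α) (S : Finset α) :
    (stabilizer (alternatingGroup α) S).index = (Fintype.card α).choose S.card := by
  have : IsPretransitive (alternatingGroup α) (Set.powersetCard α S.card) :=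
    Set.powersetCard.isPretransitive_alternatingGroup (by simpa using h3)
  let s : Set.powersetCard α S.card := ⟨S, rfl⟩
  have hs : stabilizer (alternatingGroup α) s = stabilizer (alternatingGroup α) S := by
    ext g
    rw [mem_stabilizer_iff, mem_stabilizer_iff, ← Subtype.coe_inj]
    rfl
  rw [← hs, index_stabilizer_of_transitive, Set.powersetCard.card, Nat.card_eq_fintype_card]

/-- The stabilizer `H` of `S` has index `C(n, |S|)`, at most
`[A_n : H ∩ M] = [A_n : M] [M : H ∩ M]`, and `[M : H ∩ M]` is the size of the `M`-orbit of `S`. -/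
theorem choose_le_index_mul_ncard_orbit (h3 : 3 ≤ Fintype.card α)
    (M : Subgroup (alternatingGroup α)) (S : Finset α) :
    (Fintype.card α).choose S.card ≤ M.index * (orbit M S).ncard := by
  have h1 : (stabilizer (alternatingGroup α) S).relIndex M = (orbit M S).ncard := by
    rw [← index_stabilizer]; rfl
  rw [← index_stabilizer_finset_s10 h3, ← h1, mul_comm, ← Subgroup.inf_relIndex_right,
    Subgroup.relIndex_mul_index inf_le_right]
  exact Nat.le_of_dvd (Nat.pos_of_ne_zero Subgroup.index_ne_zero_of_finite)
    (Subgroup.index_dvd_of_le inf_le_left)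

/-! ### Primitive subgroups: Bochert's argument -/

/-- If the supports of `x` (disjoint from `Γ`) and `y` (inside `Γ ∪ {a}`) meet exactly in `a`, then
the commutator of `x` and `y` is the 3-cycle `a ↦ x a ↦ y a ↦ a`. -/
theorem isThreeCycle_commutator {x y : Perm α} {a : α} {Γ : Finset α} (ha : a ∉ Γ)
    (hx : ∀ z ∈ Γ, x z = z) (hy : ∀ z ∉ Γ, z ≠ a → y z = z) (hxa : x a ≠ a) (hya : y a ≠ a) :
    (x * y * x⁻¹ * y⁻¹).IsThreeCycle := by
  have hx' : ∀ z ∉ Γ, x z ∉ Γ := fun z hz h => hz (by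
    have := hx _ h
    rw [x.injective this] at h; exact h)
  have hyaΓ : y a ∈ Γ := by
    by_contra h
    exact hya (y.injective (hy _ h hya))
  have hxya : x a ≠ y a := fun h => hx' a ha (h ▸ hyaΓ)
  suffices x * y = swap a (y a) * swap a (x a) * (y * x) by
    rw [mul_assoc, ← mul_inv_rev, this, mul_inv_cancel_right]
    exact isThreeCycle_swap_mul_swap_same hya.symm hxa.symm hxya.symm
  ext z
  simp only [Perm.mul_apply]
  by_cases hz : z ∈ Γ
  · have hza : z ≠ a := fun h => ha (h ▸ hz)
    rw [hx z hz]
    by_cases hyz : y z = a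
    · rw [hyz, swap_apply_left, swap_apply_of_ne_of_ne hxa hxya]
    · have hyzΓ : y z ∈ Γ := by
        by_contra h
        rw [y.injective (hy _ h hyz)] at h
        exact h hz
      rw [hx _ hyzΓ, swap_apply_of_ne_of_ne hyz (fun h : y z = x a => hx' a ha (h ▸ hyzΓ)),
        swap_apply_of_ne_of_ne hyz (fun h => hza (y.injective h))]
  · rcases eq_or_ne z a with rfl | hza
    · rw [hx _ hyaΓ, hy _ (hx' z hz) hxa, swap_apply_right, swap_apply_left]
    · rw [hy z hz hza]
      by_cases hxz : x z = a
      · rw [hxz, swap_apply_of_ne_of_ne hya hxya.symm, swap_apply_right]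
      · rw [hy _ (hx' z hz) hxz, swap_apply_of_ne_of_ne hxz (fun h => hza (x.injective h)),
          swap_apply_of_ne_of_ne hxz (fun h => hx' z hz (h ▸ hyaΓ))]

/-- A proper primitive subgroup of `A_n` admits a set of at least `n/2` points that contains the
support of no nontrivial element of the subgroup. -/
theorem exists_large_free (M : Subgroup (alternatingGroup α)) (hM : M ≠ ⊤)
    [hprim : IsPreprimitive M α] :
    ∃ Γ : Finset α, Fintype.card α ≤ 2 * Γ.card ∧
      ∀ g ∈ M, (∀ x ∉ Γ, g • x = x) → g = 1 := by
  classical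
  let F : Finset (Finset α) :=
    Finset.univ.filter fun Γ => ∀ g ∈ M, (∀ x ∉ Γ, g • x = x) → g = 1
  have hF : F.Nonempty := ⟨∅, by
    simp only [F, Finset.mem_filter, Finset.mem_univ, true_and]
    intro g _ hg
    ext x
    exact hg x (by simp)⟩
  obtain ⟨Γ, hΓ, hmax⟩ := F.exists_max_image Finset.card hF
  simp only [F, Finset.mem_filter, Finset.mem_univ, true_and] at hΓ hmax
  refine ⟨Γ, ?_, hΓ⟩
  by_contra hlt
  apply hM
  -- By maximality, neither the larger set `Γᶜ` nor `insert a Γ` can have the property of `Γ`.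
  have hΔ : ∃ x ∈ M, (∀ z ∈ Γ, x • z = z) ∧ x ≠ 1 := by
    by_contra! hcon
    have := hmax Γᶜ (fun g hg h => hcon g hg (fun z hz => h z (by simpa using hz)))
    rw [Finset.card_compl] at this
    omega
  obtain ⟨x, hxM, hx, hx1⟩ := hΔ
  have : ∃ a : α, x • a ≠ a := by
    by_contra! h
    exact hx1 (Subtype.ext (Equiv.ext h))
  obtain ⟨a, hxa⟩ := this
  have ha : a ∉ Γ := fun h => hxa (hx a h)
  have : ∃ y ∈ M, (∀ z ∉ insert a Γ, y • z = z) ∧ y ≠ 1 := by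
    by_contra! hcon
    have := hmax (insert a Γ) hcon
    rw [Finset.card_insert_of_notMem ha] at this
    omega
  obtain ⟨y, hyM, hy, hy1⟩ := this
  have hya : y • a ≠ a := by
    intro h
    refine hy1 (hΓ y hyM fun z hz => ?_)
    rcases eq_or_ne z a with rfl | hza
    · exact h
    · exact hy z (by simp [hza, hz])
  have h3 : ((x * y * x⁻¹ * y⁻¹ : alternatingGroup α) : Perm α).IsThreeCycle :=
    isThreeCycle_commutator (x := (x : Perm α)) (y := (y : Perm α)) ha hx
      (fun z hz hza => hy z (by simp [hza, hz])) hxa hya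
  have hmem := M.mul_mem (M.mul_mem (M.mul_mem hxM hyM) (M.inv_mem hxM)) (M.inv_mem hyM)
  rw [eq_top_iff, ← Subgroup.map_subtype_le_map_subtype,
    ← MonoidHom.range_eq_map, Subgroup.range_subtype]
  refine alternatingGroup_le_of_isPreprimitive_of_isThreeCycle_mem ?_ h3 ⟨_, hmem, rfl⟩
  let f : α →ₑ[(alternatingGroup α).subtype.subgroupMap M] α :=
    { toFun := id
      map_smul' _ _ := rfl }
  rwa [← isPreprimitive_congr (f := f) ((alternatingGroup α).subtype.subgroupMap_surjective M)
      Function.bijective_id]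
/-! ### Imprimitive subgroups -/

/-- `choose_le_index_mul_ncard_orbit` for the union of `t` members of an `M`-invariant family `P` of
disjoint sets of size `a`: its `M`-orbit consists of unions of `t` members of `P`. -/
theorem choose_le_index_mul_choose (h3 : 3 ≤ Fintype.card α)
    (M : Subgroup (alternatingGroup α)) {P : Finset (Finset α)} {a t : ℕ}
    (hdisj : (P : Set (Finset α)).PairwiseDisjoint id) (hcard : ∀ C ∈ P, C.card = a)
    (hsmul : ∀ g ∈ M, ∀ C ∈ P, g • C ∈ P) (ht : t ≤ P.card) :
    (Fintype.card α).choose (t * a) ≤ M.index * P.card.choose t := by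
  obtain ⟨T, hTP, hT⟩ := Finset.exists_subset_card_eq ht
  have hS : (T.biUnion id).card = t * a := by
    rw [Finset.card_biUnion (fun C hC D hD h => hdisj (hTP hC) (hTP hD) h)]
    simp only [id]
    rw [Finset.sum_congr rfl (fun C hC => hcard C (hTP hC)), Finset.sum_const, hT, smul_eq_mul]
  rw [← hS]
  refine (choose_le_index_mul_ncard_orbit h3 M _).trans (Nat.mul_le_mul_left _ ?_)
  have hsub : orbit M (T.biUnion id) ⊆ ((P.powersetCard t).image fun U => U.biUnion id) := by
    rintro _ ⟨g, rfl⟩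
    simp only [Finset.coe_image, Set.mem_image, Finset.mem_coe, Finset.mem_powersetCard]
    refine ⟨T.image (g • ·), ⟨?_, ?_⟩, ?_⟩
    · intro C hC
      obtain ⟨D, hD, rfl⟩ := Finset.mem_image.mp hC
      exact hsmul g g.2 D (hTP hD)
    · rw [Finset.card_image_of_injective _ (MulAction.injective g), hT]
    · ext x
      simp [← Finset.inv_smul_mem_iff]
  calc _ ≤ ((P.powersetCard t).image fun U => U.biUnion id).card := by
        rw [← Set.ncard_coe_finset]
        exact Set.ncard_le_ncard hsub (Finset.finite_toSet _)
    _ ≤ _ := Finset.card_image_le.trans_eq (Finset.card_powersetCard _ _)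

/-- `factorial_le_two_mul_index` for a transversal of an `M`-invariant family `P` of disjoint sets
with at least two points: an element of `M` supported in the transversal fixes some point in each
member of `P`, hence preserves each member, and so fixes its chosen point too. -/
theorem factorial_card_le_two_mul_index
    (M : Subgroup (alternatingGroup α)) {P : Finset (Finset α)}
    (hdisj : (P : Set (Finset α)).PairwiseDisjoint id) (hcard : ∀ C ∈ P, 2 ≤ C.card)
    (hsmul : ∀ g ∈ M, ∀ C ∈ P, g • C ∈ P) :
    P.card ! ≤ 2 * M.index := by
  have huniq : ∀ C ∈ P, ∀ D ∈ P, ∀ x ∈ C, x ∈ D → C = D := fun C hC D hD x hxC hxD => by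
    by_contra h
    exact Finset.disjoint_left.mp (hdisj hC hD h) hxC hxD
  have hne : ∀ C : P, ∃ x, x ∈ C.1 := fun C =>
    Finset.card_pos.mp (lt_of_lt_of_le two_pos (hcard C.1 C.2))
  choose f hf using hne
  have hinj : Function.Injective f := fun C D h =>
    Subtype.ext (huniq _ C.2 _ D.2 (f C) (hf C) (h ▸ hf D))
  have hΓ : ((Finset.univ : Finset P).image f).card = P.card := by
    rw [Finset.card_image_of_injective _ hinj, Finset.card_univ, Fintype.card_coe]
  rw [← hΓ]
  refine factorial_le_two_mul_index M _ fun g hg hfix => ?_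
  simp only [Finset.mem_image, Finset.mem_univ, true_and, not_exists] at hfix
  have key : ∀ C : P, g • f C = f C := by
    intro C
    obtain ⟨y, hy, hyf⟩ := Finset.exists_mem_ne (hcard C.1 C.2) (f C)
    have huf : ∀ z ∈ C.1, z ≠ f C → g • z = z := fun z hz hzf => hfix z fun D hD => by
      have : D = C := Subtype.ext (huniq _ D.2 _ C.2 z (hD ▸ hf D) hz)
      exact hzf (by rw [← hD, this])
    have hgC : g • C.1 = C.1 := by
      refine huniq _ (hsmul g hg _ C.2) _ C.2 y ?_ hy
      have := Finset.smul_mem_smul_finset (a := g) hy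
      rwa [huf y hy hyf] at this
    by_contra h
    have := huf (g • f C) (by
      have := Finset.smul_mem_smul_finset (a := g) (hf C)
      rwa [hgC] at this) h
    exact h (MulAction.injective g this)
  refine Subtype.ext (Equiv.ext fun x => ?_)
  by_cases hx : ∃ C, f C = x
  · obtain ⟨C, rfl⟩ := hx
    exact key C
  · exact hfix x fun C hC => hx ⟨C, hC⟩

/-- The translates of a nontrivial block form an `M`-invariant family `P` of disjoint sets of equal
size `a`; that they cover all points is recorded by the last equation. -/
theorem exists_partition (M : Subgroup (alternatingGroup α)) [IsPretransitive M α]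
    (h : ¬ IsPreprimitive M α) :
    ∃ (P : Finset (Finset α)) (a : ℕ), (P : Set (Finset α)).PairwiseDisjoint id ∧
      (∀ C ∈ P, C.card = a) ∧ (∀ g ∈ M, ∀ C ∈ P, g • C ∈ P) ∧
      2 ≤ a ∧ 2 ≤ P.card ∧ Fintype.card α = P.card * a := by
  classical
  have : ∃ B : Set α, IsBlock M B ∧ ¬ IsTrivialBlock B := by
    by_contra! hcon
    exact h ⟨fun {B} hB => hcon B hB⟩
  obtain ⟨B', hB, hBt⟩ := this
  obtain ⟨B, rfl⟩ : ∃ B : Finset α, (B : Set α) = B' := ⟨B'.toFinset, by simp⟩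
  rw [IsTrivialBlock, not_or, Set.not_subsingleton_iff] at hBt
  obtain ⟨hB2, hBu⟩ := hBt
  have hB2' : 2 ≤ B.card := Finset.one_lt_card_iff_nontrivial.mpr hB2
  have hmem : ∀ C, C ∈ (orbit M B).toFinset ↔ ∃ g : M, g • B = C := fun C => by
    simp [mem_orbit_iff]
  have hcard : ∀ C ∈ (orbit M B).toFinset, C.card = B.card := fun C hC => by
    obtain ⟨g, rfl⟩ := (hmem C).1 hC
    exact Finset.card_smul_finset g B
  have hdisj : (((orbit M B).toFinset : Finset _) : Set (Finset α)).PairwiseDisjoint id := by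
    intro C hC D hD hCD
    obtain ⟨g, rfl⟩ := (hmem C).1 hC
    obtain ⟨k, rfl⟩ := (hmem D).1 hD
    have := hB (g₁ := g) (g₂ := k) (fun h => hCD (by
      rw [← Finset.coe_inj]; simpa using h))
    rw [← Finset.coe_smul_finset, ← Finset.coe_smul_finset, Finset.disjoint_coe] at this
    exact this
  have hcov : ∀ x, ∃ C ∈ (orbit M B).toFinset, x ∈ C := fun x => by
    obtain ⟨b, hb⟩ := hB2.nonempty
    obtain ⟨g, rfl⟩ := exists_smul_eq M b x
    exact ⟨g • B, (hmem _).2 ⟨g, rfl⟩, Finset.smul_mem_smul_finset hb⟩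
  have hn : Fintype.card α = (orbit M B).toFinset.card * B.card := by
    have : (orbit M B).toFinset.biUnion id = Finset.univ := by
      ext x; simpa using hcov x
    rw [← Finset.card_univ, ← this, Finset.card_biUnion hdisj]
    simp only [id]
    rw [Finset.sum_congr rfl hcard, Finset.sum_const, smul_eq_mul]
  refine ⟨(orbit M B).toFinset, B.card, hdisj, hcard, ?_, hB2', ?_, hn⟩
  · intro g hg C hC
    obtain ⟨k, rfl⟩ := (hmem C).1 hC
    exact (hmem _).2 ⟨⟨g, hg⟩ * k, mul_smul _ _ _⟩
  · by_contra hlt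
    apply hBu
    have h1 : (orbit M B).toFinset.card ≤ 1 := by omega
    have : B.card = Fintype.card α := le_antisymm (Finset.card_le_univ B) (by rw [hn]; nlinarith)
    rw [Finset.card_eq_iff_eq_univ] at this
    simp [this]

/-! ### Intransitive subgroups -/

/-- An orbit or its complement, whichever is smaller, is a nonempty fixed set of at most half of
the points. -/
theorem exists_fixed_finset (M : Subgroup (alternatingGroup α))
    (h : ¬ IsPretransitive M α) :
    ∃ S : Finset α, 1 ≤ S.card ∧ 2 * S.card ≤ Fintype.card α ∧ ∀ g ∈ M, g • S = S := by
  classical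
  have : ∃ x : α, orbit M x ≠ Set.univ := by
    by_contra! hcon
    exact h ⟨fun x y => by
      have : y ∈ orbit M x := hcon x ▸ Set.mem_univ y
      exact this⟩
  obtain ⟨x, hx⟩ := this
  have hO : ∀ g ∈ M, g • (orbit M x).toFinset = (orbit M x).toFinset := fun g hg => by
    rw [← Finset.coe_inj, Finset.coe_smul_finset, Set.coe_toFinset]
    exact smul_orbit (⟨g, hg⟩ : M) x
  have h0 : 0 < (orbit M x).toFinset.card := Finset.card_pos.mpr ⟨x, by simp⟩
  have h1 : (orbit M x).toFinset.card < Fintype.card α := by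
    rw [Finset.card_lt_iff_ne_univ]
    intro h
    exact hx (by rw [← Set.coe_toFinset (orbit M x), h, Finset.coe_univ])
  rcases le_total (2 * (orbit M x).toFinset.card) (Fintype.card α) with h2 | h2
  · exact ⟨_, h0, h2, hO⟩
  · refine ⟨(orbit M x).toFinsetᶜ, ?_, ?_, fun g hg => ?_⟩
    · rw [Finset.card_compl]; omega
    · rw [Finset.card_compl]; omega
    · have := congrArg (fun s : Finset α => (s : Set α)) (hO g hg)
      simp only [Finset.coe_smul_finset] at this
      rw [← Finset.coe_inj, Finset.coe_smul_finset, Finset.coe_compl, Set.smul_set_compl, this]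

end

/-! ### Numerical estimates -/

theorem choose_le_choose_of_le {n k l : ℕ} (hkl : k ≤ l) (hl : k + l ≤ n) :
    n.choose k ≤ n.choose l := by
  have half : ∀ m, k ≤ m → 2 * m ≤ n → n.choose k ≤ n.choose m := by
    intro m hm
    induction m, hm using Nat.le_induction with
    | base => exact fun _ => le_rfl
    | succ m _ ih =>
      exact fun h => (ih (by omega)).trans (Nat.choose_le_succ_of_lt_half_left (by omega))
  rcases le_total (2 * l) n with h | h
  · exact half l hkl h
  · rw [← Nat.choose_symm (show l ≤ n by omega)]
    exact half (n - l) (by omega) (by omega)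

theorem cube_lt_choose_four {n : ℕ} (hn : 19 ≤ n) : n ^ 3 < 3 * (n - 1).choose 4 := by
  obtain ⟨m, rfl⟩ := Nat.exists_eq_add_of_le' hn
  have h := Nat.descFactorial_eq_factorial_mul_choose (m + 18) 4
  have h' : (m + 18).descFactorial 4 = (m + 18) * (m + 17) * (m + 16) * (m + 15) := by
    simp [Nat.descFactorial_succ]; ring
  rw [h', show 4 ! = 24 from rfl] at h
  rw [show m + 19 - 1 = m + 18 from rfl]
  nlinarith [sq_nonneg m, pow_nonneg (Nat.zero_le m) 3, pow_nonneg (Nat.zero_le m) 4]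

theorem cube_lt_factorial {m : ℕ} (hm : 8 ≤ m) : 2 * (4 * m) ^ 3 < 3 * m ! := by
  induction m, hm using Nat.le_induction with
  | base => decide
  | succ m hm ih =>
    rw [Nat.factorial_succ]
    have h1 : (4 * (m + 1)) ^ 3 ≤ (4 * (2 * m)) ^ 3 := Nat.pow_le_pow_left (by omega) 3
    have h2 : 9 * m ! ≤ (m + 1) * m ! := Nat.mul_le_mul_right _ (by omega)
    have h3 : (4 * (2 * m)) ^ 3 = 8 * (4 * m) ^ 3 := by ring
    omega

/-! ### The three cases -/

theorem cube_lt_of_isPreprimitive {n : ℕ} (hn : 19 ≤ n) (M : Subgroup (alternatingGroup (Fin n)))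
    (hM : M ≠ ⊤) [IsPreprimitive M (Fin n)] : n ^ 3 < 3 * M.index := by
  obtain ⟨Γ, hΓ, hfree⟩ := exists_large_free M hM
  rw [Fintype.card_fin] at hΓ
  have h1 := factorial_le_two_mul_index M Γ hfree
  have h2 := cube_lt_factorial (m := Γ.card) (by omega)
  have h3 : n ^ 3 ≤ (4 * Γ.card) ^ 3 := Nat.pow_le_pow_left (by omega) 3
  omega

theorem cube_lt_of_not_isPreprimitive {n : ℕ} (hn : 19 ≤ n)
    (M : Subgroup (alternatingGroup (Fin n))) [IsPretransitive M (Fin n)]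
    (h : ¬ IsPreprimitive M (Fin n)) : n ^ 3 < 3 * M.index := by
  obtain ⟨P, a, hdisj, hcard, hsmul, ha, hP, hnP⟩ := exists_partition M h
  have hchoose := fun t => choose_le_index_mul_choose (t := t) (by rw [Fintype.card_fin]; omega)
    M hdisj hcard hsmul
  rw [Fintype.card_fin] at hnP hchoose
  rcases le_or_gt 5 a with ha5 | ha5
  · have h1 := hchoose 1 (by omega)
    rw [one_mul, Nat.choose_one_right] at h1
    have h2 : 2 * a ≤ n := by rw [hnP]; exact Nat.mul_le_mul_right a hP
    have h3 : (n - 1).choose (a - 1) ≤ M.index := by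
      have := Nat.add_one_mul_choose_eq (n - 1) (a - 1)
      rw [Nat.sub_add_cancel (show 1 ≤ n by omega), Nat.sub_add_cancel (show 1 ≤ a by omega)] at this
      refine le_of_mul_le_mul_left ?_ (show 0 < n by omega)
      rw [this]
      calc n.choose a * a ≤ M.index * P.card * a := Nat.mul_le_mul_right a h1
        _ = n * M.index := by rw [mul_assoc, ← hnP, mul_comm]
    have h4 := choose_le_choose_of_le (n := n - 1) (k := 4) (l := a - 1) (by omega) (by omega)
    have h5 := cube_lt_choose_four hn
    omega
  rcases le_or_gt 8 P.card with hP8 | hP8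
  · have h1 := factorial_card_le_two_mul_index M hdisj (fun C hC => (hcard C hC).symm ▸ ha) hsmul
    have h2 := cube_lt_factorial hP8
    have h3 : n ^ 3 ≤ (4 * P.card) ^ 3 := Nat.pow_le_pow_left (by nlinarith) 3
    omega
  -- Since `19 ≤ n = |P| a`, only `(a, |P|) = (3, 7), (4, 5), (4, 6), (4, 7)` remain.
  · have h3 := hchoose 3 (by nlinarith)
    generalize P.card = b at *
    subst hnP
    generalize M.index = i at *
    interval_cases a <;> interval_cases b <;> first
      | omega
      | (norm_num [Nat.choose] at h3 ⊢; omega)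

theorem index_of_not_isPretransitive {n : ℕ} (hn : 19 ≤ n)
    (M : Subgroup (alternatingGroup (Fin n))) (hmax : IsCoatom M)
    (h : ¬ IsPretransitive M (Fin n)) :
    (∃ k ∈ ({1, 2, 3} : Set ℕ), M.index = n.choose k) ∨ n ^ 3 < 3 * M.index := by
  obtain ⟨S, hS1, hS2, hfix⟩ := exists_fixed_finset M h
  have hle : M ≤ stabilizer (alternatingGroup (Fin n)) S := hfix
  have hidx := index_stabilizer_finset_s10 (by rw [Fintype.card_fin]; omega) S
  rw [Fintype.card_fin] at hS2 hidx
  rcases le_or_gt S.card 3 with hS3 | hS3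
  · left
    -- The index `C(n, |S|) ≥ C(n, 1) = n` of the stabilizer is not `1`.
    have hne : stabilizer (alternatingGroup (Fin n)) S ≠ ⊤ := fun htop => by
      have h1 := choose_le_choose_of_le (n := n) hS1 (by omega)
      rw [← hidx, htop, Subgroup.index_top, Nat.choose_one_right] at h1
      omega
    have hM := (hmax.le_iff.mp hle).resolve_left hne
    refine ⟨S.card, ?_, by rw [← hM, hidx]⟩
    simp only [Set.mem_insert_iff, Set.mem_singleton_iff]
    omega
  · right
    have h1 := Nat.le_of_dvd (Nat.pos_of_ne_zero Subgroup.index_ne_zero_of_finite)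
      (Subgroup.index_dvd_of_le hle)
    have h2 := choose_le_choose_of_le (n := n) (k := 4) (l := S.card) hS3 (by omega)
    have h3 := Nat.choose_le_choose 4 (Nat.sub_le n 1)
    have h4 := cube_lt_choose_four hn
    omega

/-- For `n ≥ 19`, every maximal subgroup `M` of the alternating group `A_n` either has
index `C(n,k)` for some `k ∈ {1,2,3}`, or has index greater than `n³/3`. -/
theorem alternating_maximal_index (n : ℕ) (hn : 19 ≤ n)
    (M : Subgroup (alternatingGroup (Fin n))) (hmax : IsCoatom M) :
    (∃ k ∈ ({1, 2, 3} : Set ℕ), M.index = n.choose k) ∨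
      ((n : ℝ) ^ 3 / 3 < (M.index : ℝ)) := by
  have key : (∃ k ∈ ({1, 2, 3} : Set ℕ), M.index = n.choose k) ∨ n ^ 3 < 3 * M.index := by
    by_cases ht : IsPretransitive M (Fin n)
    · by_cases hp : IsPreprimitive M (Fin n)
      · exact Or.inr (cube_lt_of_isPreprimitive hn M hmax.1)
      · exact Or.inr (cube_lt_of_not_isPreprimitive hn M hp)
    · exact index_of_not_isPretransitive hn M hmax ht
  refine key.imp_right fun h => ?_
  have h' : (n : ℝ) ^ 3 < 3 * (M.index : ℝ) := by exact_mod_cast h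
  linarith
end
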